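/- Let α ≥ 2 be a countable ordinal and let n, m be positive integers satisfying one of: (a) n = 1 and m ≠ 2; (b) n = 2 and 2 ≤ m and m ≠ 4; (c) 2 < n and n ≤ m. Then there exists a unimodal, locally eventually onto map g : [0,1] → [0,1] with critical point c such that ω(c) ≃ ω^{α+1}·n + 1 and 𝓘 ≃ ω^{α+1}·m + 1. -/

import Mathlib

/-!
The map `g` is a tent map of slope close to `2`, and the problem is translated into symbolic
dynamics, where the symbols `false` and `true` stand for the increasing and the decreasing branch.

*Realization* (`realization`). Let `Z` be a closed shift-invariant set of two-sided sequences in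
which the symbol `true` occurs with bounded gaps, and suppose that the set `X` of its one-sided
restrictions is the `ω`-limit set, under the shift, of a sequence `w` with bounded gaps. By the
intermediate value theorem there is a slope for which the critical orbit has itinerary `w` after
finitely many steps (`exists_slope`). For this tent map `ω(c)` is homeomorphic to `X` and the set of
inhomogeneities to `Z`. A sequence `w` exists as soon as `X` is chain transitive
(`exists_limit_seq`).

*Classification* (`OrdType.of_CB_finite`). A compact totally disconnected first countable Hausdorff
space whose `γ`-th Cantor–Bendixson derivative has `k ≥ 1` points, with `γ ≠ 0`, is homeomorphic to
`ω ^ γ * k + 1`. Hence it suffices to find `Z` such that the `(α + 1)`-st derivatives of `X` and `Z`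
have `n` and `m` points.

*The subshift* (`Blueprint`). Take periodic sequences `q` and `p` with common period `N`. A sequence
`A ξ`, for `ξ ≤ ω ^ α`, is `q` with one mark (a changed symbol) at `0` and sparse marks to the right,
at those `N * 2 ^ j` with `ξ ≤ ε j`, where `ε` takes every value below `ω ^ α` infinitely often. So
`ξ ↦ A ξ` is an embedding of `ω ^ α + 1`, also after restriction to a half-line to the right, and its
top point `E` has a single mark. A sequence `B ξ` is `p` on the right and carries the sparse marks on
the left; its top point `C` is `q` followed by `p`. Finally `P` is `p` followed by `q`. Let `Z`
consist of the orbits of `q`, `p`, `P` and of all `A ξ` and `B ξ`. The `α`-th derivative of `Z`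
contains the orbits of `E` and `C` and is contained in the union of the orbits of `E`, `C`, `P`, `q`
and `p`; since `E` accumulates on `q` and `C` on `q` and `p`, the `(α + 1)`-st derivative is the union
of the two periodic orbits (`CB_Z`). In `X` the codes of the `B ξ` are lost, because only finitely
many marks remain, so the orbit of `p` disappears from the derivative and only that of `q` remains
(`CB_X`). It remains to choose `q` with an orbit of `n` elements and `p` with a disjoint orbit of
`m - n` elements, or `p = q` if `m = n`. With bounded gaps of `true` as required here, this fails
only for `(n, m) = (1, 2)` and `(2, 4)`, since there is only one orbit of size `1` and one of size `2`
containing the symbol `true`.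
-/

open Set Filter

noncomputable section

/-- The unit interval `[0,1]` as a subtype of `ℝ`. -/
abbrev unitI : Type := Set.Icc (0 : ℝ) 1

/-- `f : [0,1] → [0,1]` is unimodal with critical point `c`: continuous, `c ∈ (0,1)`,
strictly increasing on `[0,c]` and strictly decreasing on `[c,1]`. -/
def Unimodal (f : unitI → unitI) (c : unitI) : Prop :=
  Continuous f ∧ 0 < (c : ℝ) ∧ (c : ℝ) < 1 ∧
    StrictMonoOn f {x : unitI | x ≤ c} ∧ StrictAntiOn f {x : unitI | c ≤ x}

/-- `f` is locally eventually onto: for every `ε > 0` and every `x`, some iterate of `f`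
maps the `ε`-ball about `x` (in `[0,1]`) onto all of `[0,1]`. -/
def LEO (f : unitI → unitI) : Prop :=
  ∀ ε : ℝ, 0 < ε → ∀ x : unitI, ∃ N : ℕ, f^[N] '' Metric.ball x ε = Set.univ

/-- The omega-limit set of `c` under `f`: `⋂ₙ closure {fᵐ(c) : m ≥ n}`. -/
def omegaLimitSet (f : unitI → unitI) (c : unitI) : Set unitI :=
  ⋂ n : ℕ, closure {y : unitI | ∃ m : ℕ, n ≤ m ∧ f^[m] c = y}

/-- The inverse limit of `f`, as a subset of the product `ℕ → [0,1]`
(the subspace topology coincides with the topology induced by the usual metric). -/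
def InvLim (f : unitI → unitI) : Set (ℕ → unitI) :=
  {x | ∀ i : ℕ, f (x (i + 1)) = x i}

/-- The set of inhomogeneities: points of the inverse limit all of whose
coordinates lie in the postcritical omega-limit set. -/
def Inhom (f : unitI → unitI) (c : unitI) : Set (InvLim f) :=
  {x | ∀ n : ℕ, (x : ℕ → unitI) n ∈ omegaLimitSet f c}

/-- The ordinal space `{ξ : ξ ≤ o}` with its order topology. -/
def OrdSpace (o : Ordinal) : Type _ := Set.Iic o

instance (o : Ordinal) : LinearOrder (OrdSpace o) :=
  inferInstanceAs (LinearOrder (Set.Iic o))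

instance (o : Ordinal) : TopologicalSpace (OrdSpace o) := Preorder.topology (OrdSpace o)

instance (o : Ordinal) : OrderTopology (OrdSpace o) := ⟨rfl⟩

/-- `X ≃ ω^γ·k + 1` in the sense of the paper: `X` is homeomorphic to the
ordinal space `{ξ : ξ ≤ o}` with its order topology. -/
def HomeoOrd (X : Type*) [TopologicalSpace X] (o : Ordinal) : Prop :=
  Nonempty (X ≃ₜ OrdSpace o)

open Topology
universe u
set_option linter.unusedSectionVars false

/-! ### Cantor–Bendixson derivatives of sets -/

section CantorBendixson

variable {W : Type*} [TopologicalSpace W]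

/-- The `γ`-th Cantor–Bendixson derivative of a set `A`: the points of `A` that are accumulation
points of the `β`-th derivative for every `β < γ`. This one clause covers the zero, successor and
limit stages of the usual definition. -/
def CB (γ : Ordinal.{u}) (A : Set W) : Set W :=
  {x | x ∈ A ∧ ∀ β, β < γ → x ∈ closure (CB β A \ {x})}
termination_by γ

lemma mem_CB {γ : Ordinal.{u}} {A : Set W} {x : W} :
    x ∈ CB γ A ↔ x ∈ A ∧ ∀ β, β < γ → x ∈ closure (CB β A \ {x}) := by
  rw [CB]; rfl

lemma CB_subset (γ : Ordinal.{u}) (A : Set W) : CB γ A ⊆ A := fun _ h => (mem_CB.1 h).1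

lemma CB_zero (A : Set W) : CB (0 : Ordinal.{u}) A = A := by
  ext x; rw [mem_CB]; simp

lemma CB_anti {β γ : Ordinal.{u}} (h : β ≤ γ) (A : Set W) : CB γ A ⊆ CB β A := fun _ hx =>
  mem_CB.2 ⟨(mem_CB.1 hx).1, fun δ hδ => (mem_CB.1 hx).2 δ (hδ.trans_le h)⟩

lemma CB_mono (γ : Ordinal.{u}) {A B : Set W} (h : A ⊆ B) : CB γ A ⊆ CB γ B := by
  induction γ using WellFoundedLT.induction with
  | ind γ ih =>
    intro x hx
    rw [mem_CB] at hx ⊢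
    exact ⟨h hx.1, fun β hβ => closure_mono (sdiff_subset_sdiff_left (ih β hβ)) (hx.2 β hβ)⟩

lemma mem_CB_succ {γ : Ordinal.{u}} {A : Set W} {x : W} :
    x ∈ CB (γ + 1) A ↔ x ∈ A ∧ x ∈ closure (CB γ A \ {x}) := by
  rw [mem_CB]
  refine and_congr_right fun _ => ⟨fun h => h γ (Order.lt_add_one_iff.2 le_rfl), fun h β hβ => ?_⟩
  exact closure_mono (sdiff_subset_sdiff_left (CB_anti (Order.lt_add_one_iff.1 hβ) A)) h

lemma CB_inter_open (γ : Ordinal.{u}) (A : Set W) {U : Set W} (hU : IsOpen U) :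
    CB γ (A ∩ U) = CB γ A ∩ U := by
  induction γ using WellFoundedLT.induction with
  | ind γ ih =>
    ext x
    constructor
    · intro hx
      exact ⟨CB_mono γ inter_subset_left hx, ((mem_CB.1 hx).1).2⟩
    · rintro ⟨hx, hxU⟩
      rw [mem_CB] at hx ⊢
      refine ⟨⟨hx.1, hxU⟩, fun β hβ => ?_⟩
      have h1 : x ∈ closure (U ∩ (CB β A \ {x})) := hU.inter_closure ⟨hxU, hx.2 β hβ⟩
      rw [ih β hβ]
      refine closure_mono ?_ h1
      rintro y ⟨hy, hy1, hy2⟩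
      exact ⟨⟨hy1, hy⟩, hy2⟩

lemma CB_closed (γ : Ordinal.{u}) {A : Set W} (hA : IsClosed A) : IsClosed (CB γ A) := by
  refine isClosed_of_closure_subset fun x hx => ?_
  by_cases hxx : x ∈ CB γ A
  · exact hxx
  refine mem_CB.2 ⟨closure_minimal (CB_subset γ A) hA hx, fun β hβ => ?_⟩
  refine closure_mono ?_ hx
  intro y hy
  refine ⟨CB_anti hβ.le A hy, ?_⟩
  rintro rfl
  exact hxx hy

lemma CB_union (γ : Ordinal.{u}) {A B : Set W} (hA : IsClosed A) (hB : IsClosed B) :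
    CB γ (A ∪ B) ⊆ CB γ A ∪ CB γ B := by
  induction γ using WellFoundedLT.induction with
  | ind γ ih =>
    intro x hx
    rw [mem_CB] at hx
    have key : ∀ β < γ, x ∈ closure (CB β A \ {x}) ∨ x ∈ closure (CB β B \ {x}) := by
      intro β hβ
      have h1 := hx.2 β hβ
      have h2 : CB β (A ∪ B) \ {x} ⊆ (CB β A \ {x}) ∪ (CB β B \ {x}) := by
        rw [← union_sdiff_distrib]
        exact sdiff_subset_sdiff_left (ih β hβ)
      have := closure_mono h2 h1
      rwa [closure_union] at this
    by_cases hall : ∀ β < γ, x ∈ closure (CB β A \ {x})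
    · rcases eq_or_ne γ 0 with rfl | h0
      · rw [CB_zero, CB_zero]; exact hx.1
      · have hxA : x ∈ A := by
          have := hall 0 (pos_iff_ne_zero.2 h0)
          rw [CB_zero] at this
          exact closure_minimal sdiff_subset hA this
        exact Or.inl (mem_CB.2 ⟨hxA, hall⟩)
    · push Not at hall
      obtain ⟨β₀, hβ₀, hn⟩ := hall
      have h0 := (key β₀ hβ₀).resolve_left hn
      have hxB : x ∈ B :=
        closure_minimal (sdiff_subset.trans (CB_subset _ _)) hB h0
      refine Or.inr (mem_CB.2 ⟨hxB, fun β hβ => ?_⟩)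
      rcases le_total β β₀ with h | h
      · exact closure_mono (sdiff_subset_sdiff_left (CB_anti h B)) h0
      · refine (key β hβ).resolve_left fun hc => hn ?_
        exact closure_mono (sdiff_subset_sdiff_left (CB_anti h A)) hc

lemma CB_biUnion {κ : Type*} (γ : Ordinal.{u}) (s : Finset κ) (F : κ → Set W)
    (hF : ∀ k, IsClosed (F k)) : CB γ (⋃ k ∈ s, F k) ⊆ ⋃ k ∈ s, CB γ (F k) := by
  classical
  induction s using Finset.induction_on with
  | empty => simpa using CB_subset γ (∅ : Set W)
  | insert a s _ ih =>
    rw [Finset.set_biUnion_insert, Finset.set_biUnion_insert]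
    refine (CB_union γ (hF a) (isClosed_biUnion_finset fun k _ => hF k)).trans ?_
    exact union_subset_union_right _ ih

lemma CB_finite {γ : Ordinal.{u}} (hγ : 1 ≤ γ) [T1Space W] {A : Set W} (hA : A.Finite) :
    CB γ A = ∅ := by
  ext x
  simp only [mem_empty_iff_false, iff_false]
  intro hx
  have h := (mem_CB.1 hx).2 0 (zero_lt_one.trans_le hγ)
  rw [CB_zero, (hA.subset sdiff_subset).isClosed.closure_eq] at h
  exact h.2 rfl

/-- On a compact set, continuous injective maps into a Hausdorff space commute with derivatives. -/
lemma CB_image {W' : Type*} [TopologicalSpace W'] [T2Space W] [T2Space W'] (γ : Ordinal.{u})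
    {A : Set W} (hA : IsCompact A) {f : W → W'} (hf : ContinuousOn f A) (hi : InjOn f A) :
    CB γ (f '' A) = f '' CB γ A := by
  have key : ∀ x ∈ A, ∀ S ⊆ A, (f x ∈ closure (f '' S \ {f x}) ↔ x ∈ closure (S \ {x})) := by
    intro x hx S hS
    have e : f '' S \ {f x} = f '' (S \ {x}) := by
      ext y
      constructor
      · rintro ⟨⟨z, hz, rfl⟩, hne⟩
        exact ⟨z, ⟨hz, fun h => hne (by rw [mem_singleton_iff.1 h]; rfl)⟩, rfl⟩
      · rintro ⟨z, ⟨hz, hne⟩, rfl⟩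
        exact ⟨⟨z, hz, rfl⟩, fun h => hne (hi (hS hz) hx h)⟩
    rw [e]
    have hsub : S \ {x} ⊆ A := sdiff_subset.trans hS
    constructor
    · intro h
      have hK : closure (S \ {x}) ⊆ A := closure_minimal hsub hA.isClosed
      have hc : IsCompact (closure (S \ {x})) := hA.of_isClosed_subset isClosed_closure hK
      have him : IsClosed (f '' closure (S \ {x})) := (hc.image_of_continuousOn (hf.mono hK)).isClosed
      obtain ⟨z, hz, hzx⟩ := closure_minimal (image_mono subset_closure) him h
      rwa [hi (hK hz) hx hzx] at hz
    · intro h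
      exact ((hf x hx).mono hsub).mem_closure_image h
  induction γ using WellFoundedLT.induction with
  | ind γ ih =>
    ext y
    constructor
    · intro hy
      obtain ⟨⟨x, hx, rfl⟩, h2⟩ := mem_CB.1 hy
      refine ⟨x, mem_CB.2 ⟨hx, fun β hβ => ?_⟩, rfl⟩
      have := h2 β hβ
      rwa [ih β hβ, key x hx _ (CB_subset β A)] at this
    · rintro ⟨x, hx, rfl⟩
      obtain ⟨hxA, h2⟩ := mem_CB.1 hx
      refine mem_CB.2 ⟨⟨x, hxA, rfl⟩, fun β hβ => ?_⟩
      rw [ih β hβ, key x hxA _ (CB_subset β A)]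
      exact h2 β hβ

/-- A family of sets is locally finite off `G`: every point outside `G` has a neighbourhood
meeting only finitely many members. -/
def LocFinOff {κ : Type*} (G : Set W) (F : κ → Set W) : Prop :=
  ∀ y, y ∉ G → ∃ U ∈ 𝓝 y, {k | (F k ∩ U).Nonempty}.Finite

lemma LocFinOff.mono {κ : Type*} {G G' : Set W} {F : κ → Set W} (h : LocFinOff G F)
    (hG : G ⊆ G') : LocFinOff G' F := fun y hy => h y fun h' => hy (hG h')

lemma LocFinOff.isClosed {κ : Type*} {G : Set W} {F : κ → Set W} (h : LocFinOff G F)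
    (hG : IsClosed G) (hF : ∀ k, IsClosed (F k)) : IsClosed (G ∪ ⋃ k, F k) := by
  refine isClosed_of_closure_subset fun x hx => ?_
  by_contra hn
  rw [mem_union, not_or] at hn
  obtain ⟨U, hU, hfin⟩ := h x hn.1
  have hC : IsClosed (G ∪ ⋃ k ∈ hfin.toFinset, F k) :=
    hG.union (isClosed_biUnion_finset fun k _ => hF k)
  have : x ∈ closure (G ∪ ⋃ k ∈ hfin.toFinset, F k) := by
    rw [mem_closure_iff_nhds] at hx ⊢
    intro V hV
    obtain ⟨y, ⟨hyV, hyU⟩, hy⟩ := hx (V ∩ U) (inter_mem hV hU)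
    refine ⟨y, hyV, ?_⟩
    rcases hy with hy | hy
    · exact Or.inl hy
    · obtain ⟨k, hk⟩ := mem_iUnion.1 hy
      exact Or.inr (mem_biUnion (by simpa using ⟨y, hk, hyU⟩) hk)
  rw [hC.closure_eq] at this
  rcases this with h | h
  · exact hn.1 h
  · obtain ⟨k, _, hk⟩ := mem_iUnion₂.1 h
    exact hn.2 (mem_iUnion.2 ⟨k, hk⟩)

/-- Near a point outside `G` only finitely many of the sets `F k` matter. -/
lemma LocFinOff.CB_subset {κ : Type*} {G : Set W} {F : κ → Set W} (h : LocFinOff G F)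
    (hG : IsClosed G) (hF : ∀ k, IsClosed (F k)) (γ : Ordinal.{u}) :
    CB γ (G ∪ ⋃ k, F k) ⊆ G ∪ ⋃ k, CB γ (F k) := by
  intro x hx
  by_contra hn
  rw [mem_union, not_or] at hn
  obtain ⟨U, hU, hfin⟩ := h x hn.1
  obtain ⟨V, hVU, hV, hxV⟩ := mem_nhds_iff.1 (inter_mem hU (hG.isOpen_compl.mem_nhds hn.1))
  have h1 : x ∈ CB γ ((G ∪ ⋃ k, F k) ∩ V) := by
    rw [CB_inter_open γ _ hV]; exact ⟨hx, hxV⟩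
  have h2 : (G ∪ ⋃ k, F k) ∩ V ⊆ ⋃ k ∈ hfin.toFinset, F k := by
    rintro y ⟨hy | hy, hyV⟩
    · exact absurd hy (hVU hyV).2
    · obtain ⟨k, hk⟩ := mem_iUnion.1 hy
      exact mem_biUnion (by simpa using ⟨y, hk, (hVU hyV).1⟩) hk
  obtain ⟨k, _, hk⟩ := mem_iUnion₂.1 (CB_biUnion γ _ F hF (CB_mono γ h2 h1))
  exact hn.2 (mem_iUnion.2 ⟨k, hk⟩)

end CantorBendixson

/-! ### Derivatives of ordinals -/

section OrdinalDerivatives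

open Ordinal

lemma mem_closure_ord {x : Ordinal.{u}} {S : Set Ordinal.{u}} :
    x ∈ closure (S \ {x}) ↔ x ≠ 0 ∧ ∀ y < x, ∃ z ∈ S, y < z ∧ z < x := by
  rw [mem_closure_iff_clusterPt, ← accPt_principal_iff_clusterPt, SuccOrder.accPt_principal]
  simp only [isMin_iff_eq_bot, bot_eq_zero, Set.Nonempty, mem_inter_iff, mem_Ioo, ne_eq,
    ]

/-- A point of the `β`-th derivative of an ordinal is a multiple of `ω ^ β`, in the sense that
`y + ω ^ β` does not exceed it for any smaller `y`. -/
lemma CB_ord_le {β : Ordinal.{u}} {o x : Ordinal.{u}} (hx : x ∈ CB β (Iio o)) :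
    ∀ y < x, y + ω ^ β ≤ x := by
  induction β using WellFoundedLT.induction generalizing x with
  | ind β ih =>
    intro y hy
    rcases eq_or_ne β 0 with rfl | h0
    · simpa using Order.add_one_le_of_lt hy
    by_contra hlt
    rw [not_le] at hlt
    have hr : x - y < ω ^ β := by
      rw [Ordinal.sub_lt_of_le hy.le]; exact hlt
    obtain ⟨β', hβ', k, hk⟩ := (lt_omega0_opow h0).1 hr
    have hacc := (mem_closure_ord.1 ((mem_CB.1 hx).2 β' hβ')).2
    have step : ∀ k : ℕ, ∀ z < x, z + ω ^ β' * k < x := by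
      intro k
      induction k with
      | zero => intro z hz; simpa using hz
      | succ k ihk =>
        intro z hz
        obtain ⟨z', hz', h1, h2⟩ := hacc z hz
        have h3 := (ih β' hβ' hz' z h1).trans_lt h2
        have h4 := ihk _ h3
        rw [add_assoc] at h4
        have e : ω ^ β' + ω ^ β' * (k : Ordinal.{u}) = ω ^ β' * ((k + 1 : ℕ) : Ordinal.{u}) := by
          rw [add_comm k 1, Nat.cast_add, mul_add, Nat.cast_one, mul_one]
        rwa [e] at h4
    have := step k y hy
    rw [Ordinal.sub_lt_of_le hy.le] at hk
    exact lt_asymm hk this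

lemma CB_ord_bound {β : Ordinal.{u}} {o x : Ordinal.{u}} (hx : x ∈ CB β (Iio o)) : ω ^ β ≤ o := by
  have hxo : x < o := CB_subset _ _ hx
  rcases eq_or_ne β 0 with rfl | h0
  · rw [opow_zero]; exact Order.one_le_iff_pos.2 (zero_le.trans_lt hxo)
  have hx0 := (mem_closure_ord.1 ((mem_CB.1 hx).2 0 (pos_iff_ne_zero.2 h0))).1
  have := CB_ord_le hx 0 (pos_iff_ne_zero.2 hx0)
  rw [zero_add] at this
  exact this.trans hxo.le

lemma CB_ord_mem {β : Ordinal.{u}} {o y : Ordinal.{u}} (h : y + ω ^ β < o) :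
    y + ω ^ β ∈ CB β (Iio o) := by
  induction β using WellFoundedLT.induction generalizing y with
  | ind β ih =>
    refine mem_CB.2 ⟨h, fun β' hβ' => mem_closure_ord.2 ⟨?_, fun b hb => ?_⟩⟩
    · have : 0 < ω ^ β := opow_pos β omega0_pos
      exact (this.trans_le le_add_self).ne'
    · set b' := max b y
      have hyw : y < y + ω ^ β := lt_add_of_pos_right y (opow_pos β omega0_pos)
      have hb' : b' < y + ω ^ β := max_lt hb hyw
      have hyb : y ≤ b' := le_max_right _ _
      have hlt : b' + ω ^ β' < y + ω ^ β := by
        have hr : b' - y < ω ^ β := by rwa [Ordinal.sub_lt_of_le hyb]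
        rw [← Ordinal.add_sub_cancel_of_le hyb, add_assoc]
        gcongr
        exact isPrincipal_add_omega0_opow β hr ((opow_lt_opow_iff_right one_lt_omega0).2 hβ')
      refine ⟨b' + ω ^ β', ih β' hβ' (hlt.trans h), ?_, hlt⟩
      exact (le_max_left b y).trans_lt (lt_add_of_pos_right _ (opow_pos _ omega0_pos))

lemma CB_Iic_opow {α : Ordinal.{u}} (hα : α ≠ 0) : CB α (Iic (ω ^ α : Ordinal.{u})) = {ω ^ α} := by
  have e : Iic (ω ^ α : Ordinal.{u}) = Iio (ω ^ α + 1) := by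
    ext x; simp
  rw [e]
  ext x
  constructor
  · intro hx
    have hx0 := (mem_closure_ord.1 ((mem_CB.1 hx).2 0 (pos_iff_ne_zero.2 hα))).1
    have h1 := CB_ord_le hx 0 (pos_iff_ne_zero.2 hx0)
    rw [zero_add] at h1
    have h2 : x < ω ^ α + 1 := CB_subset _ _ hx
    exact le_antisymm (Order.lt_add_one_iff.1 h2) h1
  · rintro rfl
    have := CB_ord_mem (β := α) (o := ω ^ α + 1) (y := 0) (by simp)
    rwa [zero_add] at this

end OrdinalDerivatives

/-! ### Classification of compact scattered sets -/

section Classification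

open Ordinal

variable {W : Type*} [TopologicalSpace W]

/-- `A` is mapped continuously and bijectively onto the initial segment `Iio o` of the ordinals.
For compact `A` this means that `A` is homeomorphic to `Iio o`. -/
def OrdType (A : Set W) (o : Ordinal.{u}) : Prop :=
  ∃ φ : W → Ordinal.{u}, ContinuousOn φ A ∧ BijOn φ A (Iio o)

lemma OrdType.add {A B : Set W} {a b : Ordinal.{u}} (hA : OrdType A a) (hB : OrdType B b)
    (cA : IsClosed A) (cB : IsClosed B) (hd : Disjoint A B) : OrdType (A ∪ B) (a + b) := by
  classical
  obtain ⟨φ, hφ, bφ⟩ := hA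
  obtain ⟨ψ, hψ, bψ⟩ := hB
  let χ : W → Ordinal.{u} := fun x => if x ∈ A then φ x else a + ψ x
  have eA : EqOn χ φ A := fun x hx => if_pos hx
  have eB : EqOn χ (fun x => a + ψ x) B := fun x hx => if_neg fun h => hd.ne_of_mem h hx rfl
  refine ⟨χ, ?_, ?_, ?_, ?_⟩
  · refine ContinuousOn.union_of_isClosed (hφ.congr eA) ?_ cA cB
    exact ((isNormal_add_right a).continuous.comp_continuousOn hψ).congr eB
  · rintro x (hx | hx)
    · rw [eA hx]; exact (mem_Iio.1 (bφ.mapsTo hx)).trans_le le_self_add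
    · rw [eB hx]; exact add_lt_add_right (bψ.mapsTo hx) a
  · rintro x (hx | hx) y (hy | hy) h
    · rw [eA hx, eA hy] at h; exact bφ.injOn hx hy h
    · rw [eA hx, eB hy] at h
      exact absurd h ((mem_Iio.1 (bφ.mapsTo hx)).trans_le le_self_add).ne
    · rw [eB hx, eA hy] at h
      exact absurd h.symm ((mem_Iio.1 (bφ.mapsTo hy)).trans_le le_self_add).ne
    · rw [eB hx, eB hy] at h; exact bψ.injOn hx hy (add_left_cancel h)
  · intro y hy
    rcases lt_or_ge y a with h | h
    · obtain ⟨x, hx, rfl⟩ := bφ.surjOn h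
      exact ⟨x, Or.inl hx, eA hx⟩
    · have : y - a < b := by rw [Ordinal.sub_lt_of_le h]; exact hy
      obtain ⟨x, hx, hxy⟩ := bψ.surjOn this
      refine ⟨x, Or.inr hx, ?_⟩
      rw [eB hx]
      simp only [hxy]
      exact Ordinal.add_sub_cancel_of_le h

/-- Partial sums of a sequence of ordinals. -/
def ordSum (o : ℕ → Ordinal.{u}) : ℕ → Ordinal.{u}
  | 0 => 0
  | k + 1 => ordSum o k + o k

lemma ordSum_mono (o : ℕ → Ordinal.{u}) : Monotone (ordSum o) :=
  monotone_nat_of_le_succ fun _ => le_self_add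

/-- If a set is a point together with clopen rings shrinking to that point, then its order type is
one more than the supremum of the partial sums of the order types of the rings. -/
lemma OrdType.seq {A : Set W} {p : W} (hp : p ∈ A) {U : ℕ → Set W} (hU : ∀ i, IsClopen (U i))
    (hanti : Antitone U) (h0 : U 0 = Set.univ) (hpU : ∀ i, p ∈ U i)
    (hbasis : ∀ V ∈ 𝓝 p, ∃ i, U i ⊆ V) [T1Space W] {o : ℕ → Ordinal.{u}}
    (ho : ∀ i, OrdType (A ∩ (U i \ U (i + 1))) (o i)) :
    OrdType A ((⨆ i, ordSum o i) + 1) := by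
  classical
  choose φ hφ bφ using ho
  have hex : ∀ x, x ≠ p → ∃ i, x ∉ U (i + 1) := by
    intro x hx
    obtain ⟨i, hi⟩ := hbasis {x}ᶜ (isOpen_compl_singleton.mem_nhds hx.symm)
    exact ⟨i, fun h => hi (hanti (Nat.le_succ i) h) rfl⟩
  set s := ⨆ i, ordSum o i with hs
  have hle : ∀ i, ordSum o i ≤ s := fun i => le_ciSup bddAbove_of_small i
  let χ : W → Ordinal.{u} := fun x =>
    if h : x = p then s else ordSum o (Nat.find (hex x h)) + φ (Nat.find (hex x h)) x
  have χp : χ p = s := dif_pos rfl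
  have ring : ∀ i x, x ∈ U i \ U (i + 1) → χ x = ordSum o i + φ i x := by
    rintro i x ⟨h1, h2⟩
    have hne : x ≠ p := by rintro rfl; exact h2 (hpU _)
    have hf : Nat.find (hex x hne) = i := by
      rw [Nat.find_eq_iff]
      exact ⟨h2, fun n hn => not_not.2 (hanti (Nat.succ_le_of_lt hn) h1)⟩
    simp only [χ, dif_neg hne, hf]
  have inring : ∀ x, x ≠ p → ∃ i, x ∈ U i \ U (i + 1) := by
    intro x hx
    refine ⟨Nat.find (hex x hx), ?_, Nat.find_spec (hex x hx)⟩
    rcases hn : Nat.find (hex x hx) with _ | k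
    · rw [h0]; trivial
    · have := Nat.find_min (hex x hx) (m := k) (by omega)
      exact not_not.1 this
  have val_lt : ∀ i x, x ∈ A → x ∈ U i \ U (i + 1) → χ x < ordSum o (i + 1) := by
    intro i x hxA hx
    rw [ring i x hx]
    exact add_lt_add_right ((bφ i).mapsTo ⟨hxA, hx⟩) _
  have val_ge : ∀ i x, x ∈ U i \ U (i + 1) → ordSum o i ≤ χ x := by
    intro i x hx
    rw [ring i x hx]
    exact le_self_add
  refine ⟨χ, ?_, ?_, ?_, ?_⟩
  · intro x hx
    by_cases hxp : x = p
    · subst hxp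
      rw [ContinuousWithinAt, χp, tendsto_order]
      constructor
      · intro b hb
        obtain ⟨i, hi⟩ := exists_lt_of_lt_ciSup hb
        filter_upwards [mem_nhdsWithin_of_mem_nhds ((hU i).isOpen.mem_nhds (hpU i)),
          self_mem_nhdsWithin] with y hy _
        by_cases hyp : y = x
        · rw [hyp, χp]; exact hb
        obtain ⟨j, hj⟩ := inring y hyp
        have hij : i ≤ j := by
          by_contra hc
          exact hj.2 (hanti (by omega) hy)
        exact hi.trans_le ((ordSum_mono o hij).trans (val_ge j y hj))
      · intro b hb
        filter_upwards [self_mem_nhdsWithin] with y hy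
        by_cases hyp : y = x
        · rw [hyp, χp]; exact hb
        obtain ⟨j, hj⟩ := inring y hyp
        exact ((val_lt j y hy hj).trans_le (hle _)).trans hb
    · obtain ⟨i, hi⟩ := inring x hxp
      have hopen : IsOpen (U i \ U (i + 1)) := (hU i).isOpen.sdiff (hU (i + 1)).isClosed
      have h1 : ContinuousWithinAt (fun y => ordSum o i + φ i y) (A ∩ (U i \ U (i + 1))) x :=
        (isNormal_add_right (ordSum o i)).continuous.continuousAt.comp_continuousWithinAt
          (hφ i x ⟨hx, hi⟩)
      have h2 := h1.congr (g := χ) (fun y hy => ring i y hy.2) (ring i x hi)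
      exact (continuousWithinAt_inter (hopen.mem_nhds hi)).1 h2
  · intro x hx
    by_cases hxp : x = p
    · rw [hxp, χp]; exact mem_Iio.2 (Order.lt_add_one_iff.2 le_rfl)
    · obtain ⟨i, hi⟩ := inring x hxp
      exact mem_Iio.2 (Order.lt_add_one_iff.2 ((val_lt i x hx hi).le.trans (hle _)))
  · intro x hx y hy h
    by_cases hxp : x = p
    · by_cases hyp : y = p
      · rw [hxp, hyp]
      · obtain ⟨j, hj⟩ := inring y hyp
        rw [hxp, χp] at h
        exact absurd h.symm ((val_lt j y hy hj).trans_le (hle _)).ne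
    · obtain ⟨i, hi⟩ := inring x hxp
      by_cases hyp : y = p
      · rw [hyp, χp] at h
        exact absurd h ((val_lt i x hx hi).trans_le (hle _)).ne
      · obtain ⟨j, hj⟩ := inring y hyp
        have hij : i = j := by
          rcases lt_trichotomy i j with hlt | heq | hlt
          · exact absurd h (((val_lt i x hx hi).trans_le (ordSum_mono o hlt)).trans_le
              (val_ge j y hj)).ne
          · exact heq
          · exact absurd h.symm (((val_lt j y hy hj).trans_le (ordSum_mono o hlt)).trans_le
              (val_ge i x hi)).ne
        subst hij
        rw [ring i x hi, ring i y hj] at h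
        exact (bφ i).injOn ⟨hx, hi⟩ ⟨hy, hj⟩ (add_left_cancel h)
  · intro y hy
    rcases (Order.lt_add_one_iff.1 (mem_Iio.1 hy)).eq_or_lt with rfl | hlt
    · exact ⟨p, hp, χp⟩
    · have hex' : ∃ i, y < ordSum o i := exists_lt_of_lt_ciSup hlt
      rcases hn : Nat.find hex' with _ | k
      · have := Nat.find_spec hex'
        rw [hn] at this
        exact absurd this not_lt_zero
      · have h1 := Nat.find_spec hex'
        rw [hn] at h1
        have h2 : ordSum o k ≤ y := not_lt.1 (Nat.find_min hex' (m := k) (by omega))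
        have : y - ordSum o k < o k := by rw [Ordinal.sub_lt_of_le h2]; exact h1
        obtain ⟨x, hx, hxy⟩ := (bφ k).surjOn this
        refine ⟨x, hx.1, ?_⟩
        rw [ring k x hx.2, hxy]
        exact Ordinal.add_sub_cancel_of_le h2

lemma CB_OrdType [T2Space W] {A : Set W} (hA : IsCompact A) {o β : Ordinal.{u}} (h : OrdType A o)
    (hne : (CB β A).Nonempty) : ω ^ β ≤ o := by
  obtain ⟨φ, hφ, bφ⟩ := h
  obtain ⟨x, hx⟩ := hne
  have := CB_image β hA hφ bφ.injOn
  rw [bφ.image_eq] at this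
  exact CB_ord_bound (this.symm ▸ mem_image_of_mem φ hx : φ x ∈ CB β (Iio o))

variable [CompactSpace W] [T2Space W] [TotallyDisconnectedSpace W] [FirstCountableTopology W]

lemma exists_clopen_basis (p : W) : ∃ U : ℕ → Set W, (∀ i, IsClopen (U i)) ∧ Antitone U ∧
    U 0 = Set.univ ∧ (∀ i, p ∈ U i) ∧ ∀ V ∈ 𝓝 p, ∃ i, U i ⊆ V := by
  obtain ⟨B, hB⟩ := (𝓝 p).exists_antitone_basis
  have : ∀ i, ∃ V : Set W, IsClopen V ∧ p ∈ V ∧ V ⊆ B i := by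
    intro i
    obtain ⟨O, hO, hOo, hp⟩ := mem_nhds_iff.1 (hB.1.mem_of_mem (i := i) trivial)
    obtain ⟨V, h1, h2, h3⟩ := compact_exists_isClopen_in_isOpen hOo hp
    exact ⟨V, h1, h2, h3.trans hO⟩
  choose V hV hpV hVB using this
  refine ⟨fun i => ⋂ j ∈ Finset.range i, V j, fun i => ?_, ?_, by simp, fun i => ?_, ?_⟩
  · exact isClopen_biInter_finset fun j _ => hV j
  · intro i j hij
    exact biInter_subset_biInter_left fun k hk =>
      Finset.mem_range.2 ((Finset.mem_range.1 hk).trans_le hij)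
  · exact mem_iInter₂.2 fun j _ => hpV j
  · intro N hN
    obtain ⟨i, -, hi⟩ := hB.1.mem_iff.1 hN
    exact ⟨i + 1, (biInter_subset_of_mem (by simp)).trans ((hVB i).trans hi)⟩

/-- One step of the classification: a closed set whose `γ`-th derivative is a single point. -/
lemma OrdType.single {γ : Ordinal.{u}}
    (ih : ∀ A : Set W, IsClosed A → CB γ A = ∅ → ∃ o < ω ^ γ, OrdType A o)
    {A : Set W} (hA : IsClosed A) {p : W} (hp : CB γ A = {p}) :
    ∃ s ≤ ω ^ γ, OrdType A (s + 1) ∧ (γ ≠ 0 → s = ω ^ γ) := by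
  obtain ⟨U, hU, hanti, h0, hpU, hbasis⟩ := exists_clopen_basis p
  have hpC : p ∈ CB γ A := by rw [hp]; rfl
  have hpA : p ∈ A := CB_subset _ _ hpC
  have hopen : ∀ i, IsOpen (U i \ U (i + 1)) := fun i => (hU i).isOpen.sdiff (hU (i + 1)).isClosed
  have hcl : ∀ i, IsClosed (A ∩ (U i \ U (i + 1))) := fun i =>
    hA.inter ((hU i).isClosed.sdiff (hU (i + 1)).isOpen)
  have hring : ∀ i, ∃ o < ω ^ γ, OrdType (A ∩ (U i \ U (i + 1))) o := by
    intro i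
    refine ih _ (hcl i) ?_
    rw [CB_inter_open γ A (hopen i), hp]
    ext x
    simp only [mem_inter_iff, mem_singleton_iff, mem_empty_iff_false, iff_false]
    rintro ⟨rfl, hx⟩
    exact hx.2 (hpU _)
  choose o ho hot using hring
  have hpart : ∀ i, ordSum o i < ω ^ γ := by
    intro i
    induction i with
    | zero => exact opow_pos _ omega0_pos
    | succ i ihi => exact isPrincipal_add_omega0_opow γ ihi (ho i)
  have hsup : (⨆ i, ordSum o i) ≤ ω ^ γ := ciSup_le fun i => (hpart i).le
  refine ⟨_, hsup, OrdType.seq hpA hU hanti h0 hpU hbasis hot, fun hγ => le_antisymm hsup ?_⟩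
  refine le_of_forall_lt fun r hr => ?_
  obtain ⟨β, hβ, k, hk⟩ := (lt_omega0_opow hγ).1 hr
  -- infinitely many rings have a nonempty `β`-th derivative
  have hinf : ∀ j, ∃ i ≥ j, ω ^ β ≤ o i := by
    intro j
    have hacc := (mem_CB.1 hpC).2 β hβ
    obtain ⟨x, hxU, hxC, hxp⟩ := mem_closure_iff_nhds.1 hacc (U j) ((hU j).isOpen.mem_nhds (hpU j))
    obtain ⟨i, hi⟩ := hbasis {x}ᶜ (isOpen_compl_singleton.mem_nhds (Ne.symm hxp))
    have hex : ∃ i, x ∉ U i := ⟨i, fun h => hi h rfl⟩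
    classical
    have hspec := Nat.find_spec hex
    have hgt : j < Nat.find hex := by
      by_contra hc
      exact hspec (hanti (not_lt.1 hc) hxU)
    obtain ⟨l, hl⟩ : ∃ l, Nat.find hex = l + 1 := ⟨Nat.find hex - 1, by omega⟩
    have hxl : x ∈ U l := not_not.1 (Nat.find_min hex (m := l) (by omega))
    rw [hl] at hspec
    refine ⟨l, by omega, CB_OrdType (hcl l).isCompact (hot l) ⟨x, ?_⟩⟩
    rw [CB_inter_open β A (hopen l)]
    exact ⟨hxC, hxl, hspec⟩
  have hmul : ∀ k : ℕ, ∃ i, ω ^ β * k ≤ ordSum o i := by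
    intro k
    induction k with
    | zero => exact ⟨0, by simp⟩
    | succ k ihk =>
      obtain ⟨i, hi⟩ := ihk
      obtain ⟨l, hl, hol⟩ := hinf i
      refine ⟨l + 1, ?_⟩
      rw [Nat.cast_succ, mul_add, mul_one]
      exact add_le_add (hi.trans (ordSum_mono o hl)) hol
  obtain ⟨i, hi⟩ := hmul k
  exact (hk.trans_le hi).trans_le (le_ciSup bddAbove_of_small i)

lemma exists_clopen_sep {S : Set W} (hS : S.Finite) {p : W} (hp : p ∉ S) :
    ∃ V : Set W, IsClopen V ∧ p ∈ V ∧ V ∩ S = ∅ := by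
  obtain ⟨V, h1, h2, h3⟩ := compact_exists_isClopen_in_isOpen hS.isClosed.isOpen_compl hp
  refine ⟨V, h1, h2, ?_⟩
  rw [← disjoint_iff_inter_eq_empty]
  exact disjoint_left.2 fun x hx hxS => h3 hx hxS

lemma OrdType.finite_lt {γ : Ordinal.{u}}
    (ih : ∀ A : Set W, IsClosed A → CB γ A = ∅ → ∃ o < ω ^ γ, OrdType A o) (S : Set W)
    (hS : S.Finite) : ∀ A : Set W, IsClosed A → CB γ A = S →
      ∃ o < ω ^ (γ + 1), OrdType A o := by
  have hlt : ω ^ γ < ω ^ (γ + 1) :=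
    (opow_lt_opow_iff_right one_lt_omega0).2 (Order.lt_add_one_iff.2 le_rfl)
  have hlt1 : ω ^ γ + 1 < ω ^ (γ + 1) := by
    refine isPrincipal_add_omega0_opow _ hlt (lt_of_le_of_lt ?_ hlt)
    exact Order.one_le_iff_pos.2 (opow_pos _ omega0_pos)
  induction S, hS using Set.Finite.induction_on with
  | empty =>
    intro A hA h
    obtain ⟨o, ho, h'⟩ := ih A hA h
    exact ⟨o, ho.trans hlt, h'⟩
  | @insert p S hp hS ihS =>
    intro A hA h
    obtain ⟨V, hV, hpV, hVS⟩ := exists_clopen_sep hS hp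
    obtain ⟨o, ho, h1⟩ := ihS (A ∩ Vᶜ) (hA.inter hV.compl.isClosed) (by
      rw [CB_inter_open γ A hV.compl.isOpen, h]
      ext x
      constructor
      · rintro ⟨rfl | hx, hxV⟩
        · exact absurd hpV hxV
        · exact hx
      · intro hx
        exact ⟨Or.inr hx, fun hxV => (hVS.subset ⟨hxV, hx⟩ : x ∈ (∅ : Set W))⟩)
    obtain ⟨s, hs, h2, -⟩ := OrdType.single ih (hA.inter hV.isClosed) (p := p) (by
      rw [CB_inter_open γ A hV.isOpen, h]
      ext x
      constructor
      · rintro ⟨rfl | hx, hxV⟩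
        · rfl
        · exact absurd (hVS.subset ⟨hxV, hx⟩) (notMem_empty x)
      · rintro rfl
        exact ⟨Or.inl rfl, hpV⟩)
    refine ⟨o + (s + 1), isPrincipal_add_omega0_opow _ ho
      (lt_of_le_of_lt (add_le_add_left hs 1) hlt1), ?_⟩
    have := h1.add h2 (hA.inter hV.compl.isClosed) (hA.inter hV.isClosed)
      (disjoint_left.2 fun x hx hx' => hx.2 hx'.2)
    rwa [← inter_union_distrib_left, compl_union_self, inter_univ] at this

lemma OrdType.of_CB_empty (γ : Ordinal.{u}) :
    ∀ A : Set W, IsClosed A → CB γ A = ∅ → ∃ o < ω ^ γ, OrdType A o := by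
  induction γ using Ordinal.limitRecOn with
  | zero =>
    intro A _ h
    rw [CB_zero] at h
    subst h
    exact ⟨0, by simp, fun _ => 0, continuousOn_empty _, by simp [BijOn, MapsTo, SurjOn]⟩
  | add_one γ ih =>
    intro A hA h
    -- the `γ`-th derivative is compact without accumulation points, hence finite
    refine OrdType.finite_lt ih (CB γ A) ?_ A hA rfl
    have hc : IsCompact (CB γ A) := (CB_closed γ hA).isCompact
    by_contra hinf
    obtain ⟨x, hx, hacc⟩ := Set.Infinite.exists_accPt_of_subset_isCompact hinf hc subset_rfl
    rw [accPt_principal_iff_clusterPt, ← mem_closure_iff_clusterPt] at hacc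
    have : x ∈ CB (γ + 1) A := mem_CB_succ.2 ⟨CB_subset _ _ hx, hacc⟩
    rw [h] at this
    exact this
  | limit γ hγ ih =>
    intro A hA h
    have : ∃ β < γ, CB β A = ∅ := by
      by_contra hc
      push Not at hc
      have hne : (⋂ β : Iio γ, CB β.1 A).Nonempty := by
        have : Nonempty (Iio γ) := ⟨⟨0, hγ.bot_lt⟩⟩
        refine IsCompact.nonempty_iInter_of_directed_nonempty_isCompact_isClosed _ ?_
          (fun β => hc β.1 β.2) (fun β => (CB_closed _ hA).isCompact)
          (fun β => CB_closed _ hA)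
        intro a b
        rcases le_total a b with h | h
        · exact ⟨b, CB_anti h A, subset_rfl⟩
        · exact ⟨a, subset_rfl, CB_anti h A⟩
      obtain ⟨x, hx⟩ := hne
      rw [mem_iInter] at hx
      have : x ∈ CB γ A := by
        refine mem_CB.2 ⟨CB_subset _ _ (hx ⟨0, hγ.bot_lt⟩), fun β hβ => ?_⟩
        exact (mem_CB_succ.1 (hx ⟨β + 1, hγ.add_one_lt hβ⟩)).2
      rw [h] at this
      exact this
    obtain ⟨β, hβ, hβA⟩ := this
    obtain ⟨o, ho, hord⟩ := ih β hβ A hA hβA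
    exact ⟨o, ho.trans ((opow_lt_opow_iff_right one_lt_omega0).2 hβ), hord⟩

/-- A closed set with exactly `m + 1` points in its `γ`-th derivative has the order type
`ω ^ γ * (m + 1) + 1`. -/
theorem OrdType.of_CB_finite {γ : Ordinal.{u}} (hγ : γ ≠ 0) (m : ℕ) (A : Set W) (hA : IsClosed A)
    (hfin : (CB γ A).Finite) (hcard : (CB γ A).ncard = m + 1) :
    OrdType A (ω ^ γ * ((m + 1 : ℕ) : Ordinal.{u}) + 1) := by
  induction m generalizing A with
  | zero =>
    obtain ⟨p, hp⟩ := ncard_eq_one.1 hcard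
    obtain ⟨s, -, h, hs⟩ := OrdType.single (OrdType.of_CB_empty γ) hA hp
    rw [hs hγ] at h
    simpa using h
  | succ m ih =>
    obtain ⟨p, hp⟩ : (CB γ A).Nonempty := by
      rw [← ncard_pos hfin]; omega
    have hnot : p ∉ CB γ A \ {p} := fun h => h.2 rfl
    obtain ⟨V, hV, hpV, hVS⟩ := exists_clopen_sep (hfin.subset sdiff_subset) hnot
    have e1 : CB γ (A ∩ Vᶜ) = CB γ A \ {p} := by
      rw [CB_inter_open γ A hV.compl.isOpen]
      ext x
      constructor
      · rintro ⟨hx, hxV⟩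
        exact ⟨hx, fun h => hxV (by rw [mem_singleton_iff.1 h]; exact hpV)⟩
      · intro hx
        exact ⟨hx.1, fun hxV => (hVS.subset ⟨hxV, hx⟩ : x ∈ (∅ : Set W))⟩
    have e2 : CB γ (A ∩ V) = {p} := by
      rw [CB_inter_open γ A hV.isOpen]
      ext x
      constructor
      · rintro ⟨hx, hxV⟩
        by_contra hne
        exact absurd (hVS.subset ⟨hxV, hx, hne⟩) (notMem_empty x)
      · rintro rfl
        exact ⟨hp, hpV⟩
    have h1 := ih (A ∩ Vᶜ) (hA.inter hV.compl.isClosed) (by rw [e1]; exact hfin.subset sdiff_subset)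
      (by rw [e1, ncard_sdiff_singleton_of_mem hp]; omega)
    obtain ⟨s, -, h2, hs⟩ := OrdType.single (OrdType.of_CB_empty γ) (hA.inter hV.isClosed) e2
    rw [hs hγ] at h2
    have := h1.add h2 (hA.inter hV.compl.isClosed) (hA.inter hV.isClosed)
      (disjoint_left.2 fun x hx hx' => hx.2 hx'.2)
    rw [← inter_union_distrib_left, compl_union_self, inter_univ] at this
    have h1w : (1 : Ordinal.{u}) + ω ^ γ = ω ^ γ :=
      add_omega0_opow (by simpa using (opow_lt_opow_iff_right one_lt_omega0).2 (pos_iff_ne_zero.2 hγ))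
    have e : ω ^ γ * ((m + 1 : ℕ) : Ordinal.{u}) + 1 + (ω ^ γ + 1)
        = ω ^ γ * ((m + 1 + 1 : ℕ) : Ordinal.{u}) + 1 := by
      rw [add_assoc, ← add_assoc 1, h1w, ← add_assoc, Nat.cast_succ (m + 1), mul_add, mul_one]
    rwa [e] at this

lemma OrdType.homeo {A : Set W} (hA : IsClosed A) {o : Ordinal.{u}} (h : OrdType A (o + 1)) :
    HomeoOrd A o := by
  obtain ⟨φ, hφ, bφ⟩ := h
  have e : Iio (o + 1) = Iic o := by ext x; simp
  rw [e] at bφ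
  have : CompactSpace A := isCompact_iff_compactSpace.1 hA.isCompact
  let f : A ≃ Iic o := bφ.equiv φ
  have hf : Continuous f := (continuousOn_iff_continuous_domRestrict.1 hφ).subtype_mk _
  have h1 : A ≃ₜ Iic o := hf.homeoOfEquivCompactToT2
  have h2 : Iic o ≃o OrdSpace o := OrderIso.refl (Iic o)
  exact ⟨h1.trans h2.toHomeomorph⟩

end Classification

/-! ### Tent maps and itinerary series -/

section Tent

/-- The sign attached to a symbol: `+1` for `false` (the orientation preserving branch) and `-1` for
`true` (the orientation reversing branch). -/
def sgn (b : Bool) : ℝ := if b then -1 else 1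

/-- The shift on one-sided sequences. -/
def tl (a : ℕ → Bool) : ℕ → Bool := fun i => a (i + 1)

/-- The product of the first `k` signs of `a`. -/
def theta (a : ℕ → Bool) (k : ℕ) : ℝ := ∏ i ∈ Finset.range k, sgn (a i)

/-- The distance to `1` of the point of the tent map of slope `s` with itinerary `a`. -/
def HH (s : ℝ) (a : ℕ → Bool) : ℝ := ∑' k, theta a k * s⁻¹ ^ (k + 1)

lemma abs_sgn (b : Bool) : |sgn b| = 1 := by cases b <;> simp [sgn]

lemma abs_theta (a : ℕ → Bool) (k : ℕ) : |theta a k| = 1 := by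
  rw [theta, Finset.abs_prod]; simp [abs_sgn]

lemma summable_pow {s : ℝ} (hs : 1 < s) : Summable fun k : ℕ => s⁻¹ ^ (k + 1) :=
  (summable_nat_add_iff 1).2
    (summable_geometric_of_lt_one (by positivity) (inv_lt_one_of_one_lt₀ hs))

lemma summable_HH {s : ℝ} (hs : 1 < s) (a : ℕ → Bool) :
    Summable fun k => theta a k * s⁻¹ ^ (k + 1) := by
  refine Summable.of_norm_bounded (summable_pow hs) fun k => ?_
  have h0 : 0 < s := by linarith
  rw [Real.norm_eq_abs, abs_mul, abs_theta, one_mul, abs_of_nonneg (by positivity)]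

lemma theta_succ (a : ℕ → Bool) (k : ℕ) : theta a (k + 1) = sgn (a 0) * theta (tl a) k := by
  rw [theta, Finset.prod_range_succ', mul_comm]; rfl

lemma HH_rec {s : ℝ} (hs : 1 < s) (a : ℕ → Bool) :
    HH s a = (1 + sgn (a 0) * HH s (tl a)) / s := by
  rw [HH, (summable_HH hs a).tsum_eq_zero_add]
  have : ∀ k, theta a (k + 1) * s⁻¹ ^ (k + 1 + 1)
      = (sgn (a 0) / s) * (theta (tl a) k * s⁻¹ ^ (k + 1)) := by
    intro k; rw [theta_succ, pow_succ _ (k + 1), div_eq_mul_inv]; ring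
  simp_rw [this]
  rw [tsum_mul_left, ← HH]
  simp only [theta, Finset.range_zero, Finset.prod_empty, zero_add, pow_one, one_mul]
  rw [div_eq_mul_inv, div_eq_mul_inv]; ring

lemma HH_true {s : ℝ} (hs : 1 < s) {a : ℕ → Bool} (h : a 0 = true) :
    s * HH s a = 1 - HH s (tl a) := by
  rw [HH_rec hs a, h, mul_div_cancel₀ _ (by linarith)]; simp [sgn]; ring

lemma HH_false {s : ℝ} (hs : 1 < s) {a : ℕ → Bool} (h : a 0 = false) :
    s * HH s a = 1 + HH s (tl a) := by
  rw [HH_rec hs a, h, mul_div_cancel₀ _ (by linarith)]; simp [sgn]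

lemma tsum_pow {s : ℝ} (hs : 1 < s) : ∑' k : ℕ, s⁻¹ ^ (k + 1) = 1 / (s - 1) := by
  have h0 : 0 < s := by linarith
  have : ∀ k : ℕ, s⁻¹ ^ (k + 1) = s⁻¹ * s⁻¹ ^ k := fun k => by rw [pow_succ]; ring
  simp_rw [this]
  rw [tsum_mul_left, tsum_geometric_of_lt_one (by positivity) (inv_lt_one_of_one_lt₀ hs)]
  have : s - 1 ≠ 0 := by linarith
  field_simp

lemma abs_HH_le {s : ℝ} (hs : 1 < s) (a : ℕ → Bool) : |HH s a| ≤ 1 / (s - 1) := by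
  rw [← tsum_pow hs, HH, ← Real.norm_eq_abs]
  refine tsum_of_norm_bounded (summable_pow hs).hasSum fun k => ?_
  have h0 : 0 < s := by linarith
  rw [Real.norm_eq_abs, abs_mul, abs_theta, one_mul, abs_of_nonneg (by positivity)]

lemma HH_close {s : ℝ} (hs : 1 < s) (L : ℕ) : ∀ a b : ℕ → Bool, (∀ i < L, a i = b i) →
    |HH s a - HH s b| ≤ 2 / (s - 1) * s⁻¹ ^ L := by
  induction L with
  | zero =>
    intro a b _
    have h1 := abs_le.1 (abs_HH_le hs a)
    have h2 := abs_le.1 (abs_HH_le hs b)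
    have : 2 / (s - 1) = 1 / (s - 1) + 1 / (s - 1) := by ring
    rw [pow_zero, mul_one, this, abs_le]
    constructor <;> linarith
  | succ L ih =>
    intro a b h
    have h0 : 0 < s := by linarith
    have := ih (tl a) (tl b) fun i hi => h (i + 1) (by omega)
    rw [HH_rec hs a, HH_rec hs b, h 0 (by omega)]
    have e : (1 + sgn (b 0) * HH s (tl a)) / s - (1 + sgn (b 0) * HH s (tl b)) / s
        = (sgn (b 0) * (HH s (tl a) - HH s (tl b))) * s⁻¹ := by rw [div_eq_mul_inv]; ring
    rw [e, abs_mul, abs_mul, abs_sgn, one_mul, abs_of_pos (inv_pos.2 h0), pow_succ, ← mul_assoc]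
    gcongr

lemma HH_continuous {s : ℝ} (hs : 1 < s) : Continuous (HH s) := by
  rw [continuous_iff_continuousAt]
  intro a
  rw [ContinuousAt, Metric.tendsto_nhds]
  intro ε hε
  have h0 : 0 < s := by linarith
  have ht : Tendsto (fun L : ℕ => 2 / (s - 1) * s⁻¹ ^ L) atTop (𝓝 (2 / (s - 1) * 0)) :=
    (tendsto_pow_atTop_nhds_zero_of_lt_one (by positivity)
      (inv_lt_one_of_one_lt₀ hs)).const_mul _
  rw [mul_zero] at ht
  obtain ⟨L, hL⟩ := (ht.eventually (gt_mem_nhds hε)).exists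
  have : ∀ᶠ b in 𝓝 a, ∀ i ∈ Finset.range L, b i = a i := by
    rw [Filter.eventually_all_finset]
    intro i _
    exact (continuous_apply i).continuousAt.eventually
      ((isOpen_discrete {a i}).mem_nhds rfl)
  filter_upwards [this] with b hb
  rw [Real.dist_eq]
  exact (HH_close hs L b a fun i hi => hb i (Finset.mem_range.2 hi)).trans_lt hL

lemma HH_continuousOn {s₀ : ℝ} (hs : 1 < s₀) (a : ℕ → Bool) :
    ContinuousOn (fun s => HH s a) (Ici s₀) := by
  have h0 : 0 < s₀ := by linarith
  refine continuousOn_tsum (u := fun k => s₀⁻¹ ^ (k + 1)) (fun k => ?_) (summable_pow hs) ?_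
  · refine continuousOn_const.mul (ContinuousOn.pow ?_ _)
    exact continuousOn_inv₀.mono fun x hx => (h0.trans_le hx).ne'
  · intro k s hs'
    have hs' : s₀ ≤ s := hs'
    have h1 : 0 < s := h0.trans_le hs'
    rw [Real.norm_eq_abs, abs_mul, abs_theta, one_mul, abs_of_nonneg (by positivity)]
    gcongr

/-- Every block of length `M + 1` contains the symbol `true`. -/
def Gap (M : ℕ) (a : ℕ → Bool) : Prop := ∀ k, ∃ i ≤ M, a (k + i) = true

lemma Gap.tl {M : ℕ} {a : ℕ → Bool} (h : Gap M a) : Gap M (tl a) := by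
  intro k
  obtain ⟨i, hi, h'⟩ := h (k + 1)
  exact ⟨i, hi, by rw [_root_.tl, ← h']; congr 1; omega⟩

lemma Gap.isClosed (M : ℕ) : IsClosed {a | Gap M a} := by
  have : {a | Gap M a} = ⋂ k, ⋃ i ∈ Finset.range (M + 1), {a : ℕ → Bool | a (k + i) = true} := by
    ext a; simp [Gap]
  rw [this]
  refine isClosed_iInter fun k => isClosed_biUnion_finset fun i _ => ?_
  exact isClosed_eq (continuous_apply _) continuous_const

lemma HH_ge {s : ℝ} (hs : 1 < s) (a : ℕ → Bool) : (1 - 1 / (s - 1)) / s ≤ HH s a := by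
  have h0 : 0 < s := by linarith
  have := abs_le.1 (abs_HH_le hs (tl a))
  rw [div_le_iff₀ h0, mul_comm]
  rcases h : a 0 with _ | _
  · rw [HH_false hs h]; linarith
  · rw [HH_true hs h]; linarith

lemma HH_upper_aux {s : ℝ} (hs : 1 < s) (hs2 : s ≤ 2) (i : ℕ) : ∀ a : ℕ → Bool, a i = true →
    (1 / 2 : ℝ) ^ (i + 1) ≤ 1 / (s - 1) - HH s a := by
  have h0 : 0 < s := by linarith
  have hB : s * (1 / (s - 1)) - 1 = 1 / (s - 1) := by
    have : s - 1 ≠ 0 := by linarith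
    field_simp; ring
  have key : ∀ a : ℕ → Bool, a 0 = true → (1 / 2 : ℝ) ≤ 1 / (s - 1) - HH s a := by
    intro a h
    have h1 := HH_true hs h
    have h2 := HH_ge hs (tl a)
    have h3 : 1 / (s - 1) + (1 - 1 / (s - 1)) / s = 2 / s := by
      have : s - 1 ≠ 0 := by linarith
      field_simp; ring
    have h4 : 1 ≤ 2 / s := by rw [le_div_iff₀ h0]; linarith
    have h5 : s * (1 / (s - 1) - HH s a) = 1 / (s - 1) + HH s (tl a) := by
      rw [mul_sub, h1]; linarith
    nlinarith
  induction i with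
  | zero => intro a h; simpa using key a h
  | succ i ih =>
    intro a h
    rcases h' : a 0 with _ | _
    · have h1 := HH_false hs h'
      have h2 := ih (tl a) h
      have h5 : s * (1 / (s - 1) - HH s a) = 1 / (s - 1) - HH s (tl a) := by
        rw [mul_sub, h1]; linarith
      have h6 : (0 : ℝ) ≤ (1 / 2) ^ (i + 1) := by positivity
      have h7 : 0 ≤ 1 / (s - 1) - HH s a := by
        have := abs_le.1 (abs_HH_le hs a); linarith
      rw [pow_succ]
      nlinarith
    · refine le_trans ?_ (key a h')
      calc (1 / 2 : ℝ) ^ (i + 1 + 1) ≤ (1 / 2) ^ 1 :=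
            pow_le_pow_of_le_one (by norm_num) (by norm_num) (by omega)
        _ = 1 / 2 := pow_one _

lemma HH_upper {s : ℝ} {M : ℕ} (hs2 : s ≤ 2) (hsM : 2 - s ≤ (1 / 2) ^ (M + 3))
    {a : ℕ → Bool} (ha : Gap M a) : HH s a ≤ s - 1 := by
  have hM : (1 / 2 : ℝ) ^ M ≤ 1 := pow_le_one₀ (by norm_num) (by norm_num)
  have hs8 : 2 - s ≤ 1 / 8 := by
    refine hsM.trans ?_
    rw [pow_add]; linarith
  have hs : 1 < s := by linarith
  obtain ⟨i, hi, h⟩ := ha 0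
  rw [zero_add] at h
  have h1 := HH_upper_aux hs hs2 i a h
  have h2 : (1 / 2 : ℝ) ^ (M + 1) ≤ (1 / 2) ^ (i + 1) :=
    pow_le_pow_of_le_one (by norm_num) (by norm_num) (by omega)
  have h3 : 1 / (s - 1) ≤ s - 1 + 4 * (2 - s) := by
    rw [div_le_iff₀ (by linarith)]; nlinarith
  have h4 : 4 * (2 - s) ≤ (1 / 2 : ℝ) ^ (M + 1) := by
    rw [pow_add] at hsM ⊢; linarith
  linarith

lemma HH_pos {s : ℝ} {M : ℕ} (hs2 : s < 2) (hsM : 2 - s ≤ (1 / 2) ^ (M + 3))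
    {a : ℕ → Bool} (ha : Gap M a) : 0 < HH s a := by
  have hM : (1 / 2 : ℝ) ^ M ≤ 1 := pow_le_one₀ (by norm_num) (by norm_num)
  have hs8 : 2 - s ≤ 1 / 8 := by
    refine hsM.trans ?_
    rw [pow_add]; linarith
  have hs : 1 < s := by linarith
  have h0 : 0 < s := by linarith
  have h1 := HH_upper hs2.le hsM ha.tl
  refine pos_of_mul_pos_right (a := s) ?_ h0.le
  rcases h' : a 0 with _ | _
  · rw [HH_false hs h']
    have := HH_ge hs (tl a)
    have h3 : 1 / (s - 1) ≤ 2 := by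
      rw [div_le_iff₀ (by linarith)]; linarith
    have h4 : -1 < (1 - 1 / (s - 1)) / s := by
      rw [lt_div_iff₀ h0]; linarith
    linarith
  · rw [HH_true hs h']; linarith

/-- `w` preceded by `N` symbols `false`. -/
def pre (N : ℕ) (w : ℕ → Bool) : ℕ → Bool := fun i => if i < N then false else w (i - N)

lemma tl_pre (N : ℕ) (w : ℕ → Bool) : tl (pre (N + 1) w) = pre N w := by
  funext i; simp [tl, pre]

lemma pre_zero (w : ℕ → Bool) : pre 0 w = w := by funext i; simp [pre]

lemma HH_pre {s : ℝ} (hs : 1 < s) (N : ℕ) (w : ℕ → Bool) :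
    s * HH s (pre (N + 1) w) = 1 + HH s (pre N w) := by
  rw [HH_false hs (by simp [pre]), tl_pre]

lemma HH_pre_eq {s : ℝ} (hs : 1 < s) (N : ℕ) (w : ℕ → Bool) :
    s ^ N * (1 / (s - 1) - HH s (pre N w)) = 1 / (s - 1) - HH s w := by
  have hB : s * (1 / (s - 1)) - 1 = 1 / (s - 1) := by
    have : s - 1 ≠ 0 := by linarith
    field_simp; ring
  induction N with
  | zero => simp [pre_zero]
  | succ N ih => rw [pow_succ, mul_assoc, mul_sub, HH_pre hs, ← ih]; congr 1; linarith

/-- A slope for which the critical orbit follows the itinerary `w` after finitely many steps. -/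
lemma exists_slope {M : ℕ} {w : ℕ → Bool} (hw : Gap M w) :
    ∃ (N : ℕ) (s : ℝ), s < 2 ∧ 2 - s ≤ (1 / 2) ^ (M + 3) ∧ HH s (pre N w) = 1 := by
  have hM : (1 / 2 : ℝ) ^ M ≤ 1 := pow_le_one₀ (by norm_num) (by norm_num)
  have hM0 : (0 : ℝ) < (1 / 2) ^ (M + 3) := by positivity
  have hs8 : (1 / 2 : ℝ) ^ (M + 3) ≤ 1 / 8 := by rw [pow_add]; linarith
  set s₀ : ℝ := 2 - (1 / 2) ^ (M + 3) with hs₀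
  have h1 : 1 < s₀ := by linarith
  have h0 : 0 < s₀ := by linarith
  have hB : 1 < 1 / (s₀ - 1) := by rw [lt_div_iff₀ (by linarith)]; linarith
  obtain ⟨N, hN⟩ : ∃ N : ℕ, 2 * (1 / (s₀ - 1)) / (1 / (s₀ - 1) - 1) < s₀ ^ N :=
    pow_unbounded_of_one_lt _ h1
  have hlow : 1 ≤ HH s₀ (pre N w) := by
    have e := HH_pre_eq h1 N w
    have h2 := abs_le.1 (abs_HH_le h1 w)
    rw [div_lt_iff₀ (by linarith)] at hN
    have hp : 0 < s₀ ^ N := by positivity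
    by_contra hc
    rw [not_le] at hc
    have : s₀ ^ N * (1 / (s₀ - 1) - 1) < s₀ ^ N * (1 / (s₀ - 1) - HH s₀ (pre N w)) := by
      gcongr
    linarith
  have hup : HH 2 (pre N w) < 1 := by
    have e := HH_pre_eq (by norm_num : (1 : ℝ) < 2) N w
    obtain ⟨i, hi, h⟩ := hw 0
    rw [zero_add] at h
    have h2 := HH_upper_aux (by norm_num : (1 : ℝ) < 2) le_rfl i w h
    have h3 : (0 : ℝ) < (1 / 2) ^ (i + 1) := by positivity
    have h4 : 0 < (2 : ℝ) ^ N * (1 / (2 - 1) - HH 2 (pre N w)) := by rw [e]; linarith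
    have := pos_of_mul_pos_right h4 (by positivity)
    norm_num at this
    exact this
  have hcont : ContinuousOn (fun s => HH s (pre N w)) (Icc s₀ 2) :=
    (HH_continuousOn h1 _).mono fun x hx => hx.1
  obtain ⟨s, hs, hs1⟩ := intermediate_value_Icc' (by linarith : s₀ ≤ 2) hcont ⟨hup.le, hlow⟩
  refine ⟨N, s, lt_of_le_of_ne hs.2 ?_, by linarith [hs.1], hs1⟩
  rintro rfl
  exact hup.ne hs1

end Tent

section TentMap

/-- The tent map of slope `s`, normalized so that its maximum is `1` and `1` is mapped to `0`. -/
def TT (s x : ℝ) : ℝ := 1 - |s * (1 - x) - 1|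

lemma TT_continuous (s : ℝ) : Continuous (TT s) := by unfold TT; fun_prop

lemma TT_left {s x : ℝ} (h : 1 ≤ s * (1 - x)) : TT s x = 2 - s * (1 - x) := by
  rw [TT, abs_of_nonneg (by linarith)]; ring

lemma TT_right {s x : ℝ} (h : s * (1 - x) ≤ 1) : TT s x = s * (1 - x) := by
  rw [TT, abs_of_nonpos (by linarith)]; ring

lemma TT_mem {s x : ℝ} (hs : 0 ≤ s) (hs2 : s ≤ 2) (hx : x ∈ Icc (0 : ℝ) 1) :
    TT s x ∈ Icc (0 : ℝ) 1 := by
  obtain ⟨h0, h1⟩ := hx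
  have h2 : 0 ≤ s * (1 - x) := mul_nonneg hs (by linarith)
  have h3 : s * (1 - x) ≤ 2 := by nlinarith
  rcases le_total 1 (s * (1 - x)) with h | h
  · rw [TT_left h]; constructor <;> linarith
  · rw [TT_right h]; constructor <;> linarith

/-- The image of an interval under an iterate of the tent map grows until it is everything. -/
lemma TT_leo {s : ℝ} (hs : 2 < s ^ 2) (hs0 : 0 < s) (hs2 : s ≤ 2) (n : ℕ) : ∀ u v : ℝ, 0 ≤ u →
    u ≤ v → v ≤ 1 → 1 < (s ^ 2 / 2) ^ n * (v - u) →
    ∃ N : ℕ, Icc (0 : ℝ) 1 ⊆ (TT s)^[N] '' Icc u v := by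
  have hs1 : 1 < s := by nlinarith
  have hl : 1 < s ^ 2 / 2 := by linarith
  have hls : s ^ 2 / 2 ≤ s := by nlinarith
  induction n with
  | zero => intro u v h0 h1 h2 h; rw [pow_zero, one_mul] at h; linarith
  | succ n ih =>
    have hP : (0 : ℝ) < (s ^ 2 / 2) ^ n := by positivity
    -- an interval on which the map is monotone is stretched by the factor `s`
    have mono : ∀ u v : ℝ, 0 ≤ u → u ≤ v → v ≤ 1 → (s * (1 - u) ≤ 1 ∨ 1 ≤ s * (1 - v)) →
        ∃ u' v', 0 ≤ u' ∧ u' ≤ v' ∧ v' ≤ 1 ∧ v' - u' = s * (v - u) ∧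
          Icc u' v' ⊆ TT s '' Icc u v := by
      rintro u v h0 h1 h2 (h | h)
      · have hu := TT_right h
        have hv : TT s v = s * (1 - v) := TT_right (by nlinarith)
        refine ⟨TT s v, TT s u, (TT_mem hs0.le hs2 ⟨by linarith, h2⟩).1, by rw [hu, hv]; nlinarith,
          (TT_mem hs0.le hs2 ⟨h0, by linarith⟩).2, by rw [hu, hv]; ring,
          intermediate_value_Icc' h1 (TT_continuous s).continuousOn⟩
      · have hv := TT_left h
        have hu : TT s u = 2 - s * (1 - u) := TT_left (by nlinarith)
        refine ⟨TT s u, TT s v, (TT_mem hs0.le hs2 ⟨h0, by linarith⟩).1, by rw [hu, hv]; nlinarith,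
          (TT_mem hs0.le hs2 ⟨by linarith, h2⟩).2, by rw [hu, hv]; ring,
          intermediate_value_Icc h1 (TT_continuous s).continuousOn⟩
    intro u v h0 h1 h2 h
    rw [pow_succ, mul_assoc] at h
    by_cases hm : s * (1 - u) ≤ 1 ∨ 1 ≤ s * (1 - v)
    · obtain ⟨u', v', a1, a2, a3, a4, a5⟩ := mono u v h0 h1 h2 hm
      obtain ⟨N, hN⟩ := ih u' v' a1 a2 a3 (by
        refine h.trans_le ?_
        rw [a4]; gcongr)
      refine ⟨N + 1, hN.trans ?_⟩
      rw [Function.iterate_succ, image_comp]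
      exact image_mono a5
    · push Not at hm
      obtain ⟨hmu, hmv⟩ := hm
      set c : ℝ := 1 - s⁻¹ with hc
      have hsc : s * (1 - c) = 1 := by rw [hc]; field_simp; ring
      have huc : u < c := by
        by_contra hcon; nlinarith
      have hcv : c < v := by
        by_contra hcon; nlinarith
      have hTc : TT s c = 1 := by rw [TT_left hsc.ge, hsc]; norm_num
      -- the image contains an interval ending at `1`
      obtain ⟨u', b1, b2, b3⟩ : ∃ u', 0 ≤ u' ∧ s / 2 * (v - u) ≤ 1 - u' ∧
          Icc u' 1 ⊆ TT s '' Icc u v := by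
        rcases le_total (c - u) (v - c) with hcase | hcase
        · refine ⟨TT s v, (TT_mem hs0.le hs2 ⟨by linarith, h2⟩).1, ?_, ?_⟩
          · rw [TT_right (by linarith)]; nlinarith
          · rw [← hTc]
            exact (intermediate_value_Icc' hcv.le (TT_continuous s).continuousOn).trans
              (image_mono (Icc_subset_Icc_left huc.le))
        · refine ⟨TT s u, (TT_mem hs0.le hs2 ⟨h0, by linarith⟩).1, ?_, ?_⟩
          · rw [TT_left hmu.le]; nlinarith
          · rw [← hTc]
            exact (intermediate_value_Icc huc.le (TT_continuous s).continuousOn).trans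
              (image_mono (Icc_subset_Icc_right hcv.le))
      have b4 : u' ≤ 1 := by nlinarith
      rcases le_or_gt u' c with huc' | huc'
      · -- the image contains `[c, 1]`, which is mapped onto `[0, 1]`
        refine ⟨2, ?_⟩
        have hT1 : TT s 1 = 0 := by rw [TT_right (by simp)]; simp
        have : Icc (0 : ℝ) 1 ⊆ TT s '' Icc c 1 := by
          have := intermediate_value_Icc' (by linarith : c ≤ 1)
            (TT_continuous s).continuousOn (f := TT s)
          rwa [hTc, hT1] at this
        refine this.trans ?_
        rw [Function.iterate_succ, image_comp, Function.iterate_one]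
        exact image_mono ((Icc_subset_Icc_left huc').trans b3)
      · obtain ⟨u'', v'', a1, a2, a3, a4, a5⟩ := mono u' 1 b1 b4 le_rfl (Or.inl (by
          rw [← hsc]; exact mul_le_mul_of_nonneg_left (by linarith) hs0.le))
        obtain ⟨N, hN⟩ := ih u'' v'' a1 a2 a3 (by
          refine h.trans_le ?_
          rw [a4]
          have e : s ^ 2 / 2 * (v - u) = s * (s / 2 * (v - u)) := by ring
          rw [e]
          exact mul_le_mul_of_nonneg_left (mul_le_mul_of_nonneg_left b2 hs0.le) hP.le)
        refine ⟨N + 2, hN.trans ?_⟩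
        rw [Function.iterate_add, image_comp]
        refine image_mono (a5.trans ?_)
        rw [Function.iterate_succ, image_comp, Function.iterate_one]
        exact image_mono b3

/-- The tent map as a self-map of the unit interval. -/
def tent (s : ℝ) (hs : 0 ≤ s) (hs2 : s ≤ 2) (x : unitI) : unitI := ⟨TT s x, TT_mem hs hs2 x.2⟩

lemma tent_unimodal {s : ℝ} (hs : 1 < s) (hs2 : s ≤ 2) (c : unitI) (hc : (c : ℝ) = 1 - s⁻¹) :
    Unimodal (tent s (by linarith) hs2) c := by
  have h0 : 0 < s := by linarith
  have hsc : s * (1 - (c : ℝ)) = 1 := by rw [hc]; field_simp; ring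
  have hi : s⁻¹ < 1 := inv_lt_one_of_one_lt₀ hs
  have hi0 : 0 < s⁻¹ := inv_pos.2 h0
  refine ⟨?_, by linarith, by linarith, ?_, ?_⟩
  · exact ((TT_continuous s).comp continuous_subtype_val).subtype_mk _
  · intro x hx y hy hxy
    have hx' : (x : ℝ) ≤ c := hx
    have hy' : (y : ℝ) ≤ c := hy
    have hxy' : (x : ℝ) < y := hxy
    change TT s x < TT s y
    rw [TT_left (by nlinarith), TT_left (by nlinarith)]
    nlinarith
  · intro x hx y hy hxy
    have hx' : (c : ℝ) ≤ x := hx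
    have hy' : (c : ℝ) ≤ y := hy
    have hxy' : (x : ℝ) < y := hxy
    change TT s y < TT s x
    rw [TT_right (by nlinarith), TT_right (by nlinarith)]
    nlinarith

lemma tent_iterate {s : ℝ} (hs : 0 ≤ s) (hs2 : s ≤ 2) (N : ℕ) (x : unitI) :
    (((tent s hs hs2)^[N] x : unitI) : ℝ) = (TT s)^[N] x := by
  induction N generalizing x with
  | zero => rfl
  | succ N ih => rw [Function.iterate_succ_apply, ih]; rfl

lemma tent_leo {s : ℝ} (hs : 2 < s ^ 2) (hs0 : 0 < s) (hs2 : s ≤ 2) :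
    LEO (tent s hs0.le hs2) := by
  intro ε hε x
  obtain ⟨u, v, h0, h1, h2, h3⟩ : ∃ u v : ℝ, 0 ≤ u ∧ u < v ∧ v ≤ 1 ∧
      Icc u v ⊆ {y : ℝ | |y - x| < ε} := by
    rcases lt_or_ge (x : ℝ) (1 / 2) with h | h
    · refine ⟨x, min (x + ε / 2) 1, x.2.1, lt_min (by linarith) (by linarith), min_le_right _ _, ?_⟩
      intro y hy
      have := hy.2.trans (min_le_left _ _)
      rw [mem_ofPred_eq, abs_lt]; constructor <;> linarith [hy.1]
    · refine ⟨max (x - ε / 2) 0, x, le_max_right _ _, max_lt (by linarith) (by linarith), x.2.2, ?_⟩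
      intro y hy
      have := (le_max_left _ _).trans hy.1
      rw [mem_ofPred_eq, abs_lt]; constructor <;> linarith [hy.2]
  have hl : 1 < s ^ 2 / 2 := by linarith
  obtain ⟨n, hn⟩ := pow_unbounded_of_one_lt (1 / (v - u)) hl
  rw [div_lt_iff₀ (by linarith)] at hn
  obtain ⟨N, hN⟩ := TT_leo hs hs0 hs2 n u v h0 h1.le h2 hn
  refine ⟨N, eq_univ_of_forall fun y => ?_⟩
  obtain ⟨t, ht, hty⟩ := hN y.2
  refine ⟨⟨t, h0.trans ht.1, ht.2.trans h2⟩, ?_, ?_⟩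
  · rw [Metric.mem_ball, Subtype.dist_eq, Real.dist_eq]; exact h3 ht
  · apply Subtype.ext; rw [tent_iterate]; exact hty

end TentMap

/-! ### Realizing a subshift by a tent map -/

section Realization

/-- The shift by `k` on two-sided sequences. -/
def sh (k : ℤ) (z : ℤ → Bool) : ℤ → Bool := fun i => z (i + k)

/-- The restriction of a two-sided sequence to the nonnegative positions. -/
def pr (z : ℤ → Bool) : ℕ → Bool := fun i => z i

/-- The sequence `w` with its first `k` symbols removed. -/
def shN (k : ℕ) (w : ℕ → Bool) : ℕ → Bool := fun i => w (k + i)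

lemma sh_continuous (k : ℤ) : Continuous (sh k) :=
  continuous_pi fun i => continuous_apply (i + k)

lemma pr_continuous : Continuous pr := continuous_pi fun i => continuous_apply (i : ℤ)

lemma sh_sh (k l : ℤ) (z : ℤ → Bool) : sh k (sh l z) = sh (k + l) z := by
  funext i; simp only [sh]; congr 1; ring

lemma sh_zero (z : ℤ → Bool) : sh 0 z = z := by funext i; simp [sh]

/-- The point of the unit interval with itinerary `a`. -/
def pt (s : ℝ) (a : ℕ → Bool) : unitI := Set.projIcc 0 1 zero_le_one (1 - HH s a)

lemma pt_continuous {s : ℝ} (hs : 1 < s) : Continuous (pt s) :=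
  continuous_projIcc.comp (continuous_const.sub (HH_continuous hs))

lemma pt_val {s : ℝ} {a : ℕ → Bool} (h : HH s a ∈ Icc (0 : ℝ) 1) : (pt s a : ℝ) = 1 - HH s a := by
  rw [pt, projIcc_of_mem zero_le_one (x := 1 - HH s a) ⟨by linarith [h.2], by linarith [h.1]⟩]

variable {s : ℝ} {M : ℕ}

lemma slope_gt (hsM : 2 - s ≤ (1 / 2) ^ (M + 3)) : 15 / 8 ≤ s := by
  have hM : (1 / 2 : ℝ) ^ M ≤ 1 := pow_le_one₀ (by norm_num) (by norm_num)
  rw [pow_add] at hsM; linarith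

lemma HH_mem (hs2 : s < 2) (hsM : 2 - s ≤ (1 / 2) ^ (M + 3)) {a : ℕ → Bool} (ha : Gap M a) :
    HH s a ∈ Icc (0 : ℝ) 1 :=
  ⟨(HH_pos hs2 hsM ha).le, by linarith [HH_upper hs2.le hsM ha]⟩

/-- For slopes close to `2` depending on `M`, sequences with gaps at most `M` are determined by the
point they represent. -/
lemma HH_injOn (hs2 : s < 2) (hsM : 2 - s ≤ (1 / 2) ^ (M + 3)) : InjOn (HH s) {a | Gap M a} := by
  have hs : 1 < s := by linarith [slope_gt hsM]
  have key : ∀ i : ℕ, ∀ a b : ℕ → Bool, Gap M a → Gap M b → HH s a = HH s b → a i = b i := by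
    intro i
    -- the first symbol is the sign of `s * HH s a - 1`
    have first : ∀ a b : ℕ → Bool, Gap M a → Gap M b → HH s a = HH s b →
        a 0 = b 0 ∧ HH s (tl a) = HH s (tl b) := by
      intro a b ha hb h
      have h1 := HH_pos hs2 hsM ha.tl
      have h2 := HH_pos hs2 hsM hb.tl
      rcases e1 : a 0 with _ | _ <;> rcases e2 : b 0 with _ | _
      · have a1 := HH_false hs e1; have a2 := HH_false hs e2
        rw [h] at a1; exact ⟨rfl, by linarith⟩
      · have a1 := HH_false hs e1; have a2 := HH_true hs e2
        rw [h] at a1; linarith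
      · have a1 := HH_true hs e1; have a2 := HH_false hs e2
        rw [h] at a1; linarith
      · have a1 := HH_true hs e1; have a2 := HH_true hs e2
        rw [h] at a1; exact ⟨rfl, by linarith⟩
    induction i with
    | zero => intro a b ha hb h; exact (first a b ha hb h).1
    | succ i ih => intro a b ha hb h; exact ih _ _ ha.tl hb.tl (first a b ha hb h).2
  intro a ha b hb h
  funext i
  exact key i a b ha hb h

lemma pt_injOn (hs2 : s < 2) (hsM : 2 - s ≤ (1 / 2) ^ (M + 3)) : InjOn (pt s) {a | Gap M a} := by
  intro a ha b hb h
  refine HH_injOn hs2 hsM ha hb ?_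
  have := congrArg (fun x : unitI => (x : ℝ)) h
  simp only [pt_val (HH_mem hs2 hsM ha), pt_val (HH_mem hs2 hsM hb)] at this
  linarith

lemma tent_pt (hs2 : s < 2) (hsM : 2 - s ≤ (1 / 2) ^ (M + 3)) (h0 : 0 ≤ s) {a : ℕ → Bool}
    (ha : Gap M a) : tent s h0 hs2.le (pt s a) = pt s (tl a) := by
  have hs : 1 < s := by linarith [slope_gt hsM]
  apply Subtype.ext
  change TT s (pt s a) = _
  rw [pt_val (HH_mem hs2 hsM ha), pt_val (HH_mem hs2 hsM ha.tl), TT, sub_sub_cancel]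
  have := HH_pos hs2 hsM ha.tl
  rcases e : a 0 with _ | _
  · rw [HH_false hs e, abs_of_nonneg (by linarith)]; ring
  · rw [HH_true hs e, abs_of_nonpos (by linarith)]; ring

lemma HH_pre_nonneg (hs2 : s < 2) (hsM : 2 - s ≤ (1 / 2) ^ (M + 3)) {w : ℕ → Bool}
    (hw : Gap M w) (N : ℕ) : 0 ≤ HH s (pre N w) := by
  have hs : 1 < s := by linarith [slope_gt hsM]
  induction N with
  | zero => rw [pre_zero]; exact (HH_pos hs2 hsM hw).le
  | succ N ih =>
    have := HH_pre hs N w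
    refine nonneg_of_mul_nonneg_right (a := s) ?_ (by linarith)
    linarith

lemma TT_pre (hs2 : s < 2) (hsM : 2 - s ≤ (1 / 2) ^ (M + 3)) {w : ℕ → Bool}
    (hw : Gap M w) (N : ℕ) : (TT s)^[N] (1 - HH s (pre N w)) = 1 - HH s w := by
  have hs : 1 < s := by linarith [slope_gt hsM]
  induction N with
  | zero => rw [pre_zero]; rfl
  | succ N ih =>
    rw [Function.iterate_succ_apply, ← ih]
    congr 1
    rw [TT, sub_sub_cancel, HH_pre hs, add_sub_cancel_left,
      abs_of_nonneg (HH_pre_nonneg hs2 hsM hw N)]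

/-- A two-sided subshift `Z` whose one-sided restriction is the `ω`-limit set of a one-sided
sequence `w` is realized by a tent map: the restriction as `ω(c)`, and `Z` itself as the set of
inhomogeneities. -/
theorem realization {Z : Set (ℤ → Bool)} (hZ : IsClosed Z) (hsh : ∀ z ∈ Z, ∀ k, sh k z ∈ Z)
    {M : ℕ} (hgap : ∀ z ∈ Z, Gap M (pr z)) {w : ℕ → Bool} (hw : Gap M w)
    (hlim : ⋂ K, closure {b | ∃ k ≥ K, shN k w = b} = pr '' Z) :
    ∃ (g : unitI → unitI) (c : unitI), Unimodal g c ∧ LEO g ∧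
      Nonempty (omegaLimitSet g c ≃ₜ pr '' Z) ∧ Nonempty (Inhom g c ≃ₜ Z) := by
  obtain ⟨N, s, hs2, hsM, hN⟩ := exists_slope hw
  have hs8 := slope_gt hsM
  have hs : 1 < s := by linarith
  have h0 : 0 < s := by linarith
  have hi : s⁻¹ < 1 := inv_lt_one_of_one_lt₀ hs
  have hi0 : 0 < s⁻¹ := inv_pos.2 h0
  set g := tent s h0.le hs2.le with hg
  set c : unitI := ⟨1 - s⁻¹, by linarith, by linarith⟩ with hc
  have hcompZ : IsCompact Z := hZ.isCompact
  have hXgap : ∀ a ∈ pr '' Z, Gap M a := by rintro _ ⟨z, hz, rfl⟩; exact hgap z hz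
  have hXcomp : IsCompact (pr '' Z) := hcompZ.image pr_continuous
  have hinj := pt_injOn hs2 hsM
  have hwk : ∀ k, Gap M (shN k w) := by
    intro k j
    obtain ⟨i, hi, h⟩ := hw (k + j)
    exact ⟨i, hi, by rw [shN, ← h]; congr 1; omega⟩
  have htl : ∀ k, tl (shN k w) = shN (k + 1) w := by
    intro k; funext i; simp only [tl, shN]; congr 1; omega
  -- the critical orbit
  have hcrit0 : g^[N + 2] c = pt s w := by
    apply Subtype.ext
    rw [tent_iterate, pt_val (HH_mem hs2 hsM hw), ← TT_pre hs2 hsM hw N, hN,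
      Function.iterate_add_apply]
    congr 1
    have e1 : TT s c = 1 := by rw [TT_left] <;> simp [hc] <;> field_simp <;> norm_num
    have e2 : TT s 1 = 1 - 1 := by rw [TT_right] <;> simp
    rw [Function.iterate_succ_apply, e1, Function.iterate_one, e2]
  have hcrit : ∀ k, g^[k + (N + 2)] c = pt s (shN k w) := by
    intro k
    induction k with
    | zero => rw [zero_add, hcrit0]; congr 1; funext i; simp [shN]
    | succ k ih =>
      rw [show k + 1 + (N + 2) = (k + (N + 2)) + 1 by omega, Function.iterate_succ_apply', ih, hg,
        tent_pt hs2 hsM h0.le (hwk k), htl]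
  have homega : omegaLimitSet g c = pt s '' (pr '' Z) := by
    apply Subset.antisymm
    · intro y hy
      have hy' : ∀ K, y ∈ pt s '' closure {b | ∃ k ≥ K, shN k w = b} := by
        intro K
        have h1 := mem_iInter.1 hy (K + (N + 2))
        have hcl : IsClosed (pt s '' closure {b | ∃ k ≥ K, shN k w = b}) :=
          (isClosed_closure.isCompact.image (pt_continuous hs)).isClosed
        refine closure_minimal ?_ hcl h1
        rintro _ ⟨m, hm, rfl⟩
        refine ⟨shN (m - (N + 2)) w, subset_closure ⟨m - (N + 2), by omega, rfl⟩, ?_⟩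
        rw [← hcrit]; congr 1; omega
      have hgapcl : ∀ K, closure {b | ∃ k ≥ K, shN k w = b} ⊆ {a | Gap M a} := by
        intro K
        refine closure_minimal ?_ (Gap.isClosed M)
        rintro _ ⟨k, -, rfl⟩; exact hwk k
      choose a ha hay using hy'
      refine ⟨a 0, ?_, hay 0⟩
      rw [← hlim, mem_iInter]
      intro K
      have : a K = a 0 := hinj (hgapcl K (ha K)) (hgapcl 0 (ha 0)) ((hay K).trans (hay 0).symm)
      rw [← this]; exact ha K
    · rintro _ ⟨a, ha, rfl⟩
      rw [omegaLimitSet, mem_iInter]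
      intro n
      rw [← hlim] at ha
      have h1 := mem_iInter.1 ha n
      refine closure_mono ?_ (image_closure_subset_closure_image (pt_continuous hs) ⟨a, h1, rfl⟩)
      rintro _ ⟨_, ⟨k, hk, rfl⟩, rfl⟩
      exact ⟨k + (N + 2), by omega, hcrit k⟩
  refine ⟨g, c, tent_unimodal hs hs2.le c rfl, tent_leo (by nlinarith) h0 hs2.le, ?_, ?_⟩
  · have : CompactSpace (pr '' Z) := isCompact_iff_compactSpace.1 hXcomp
    have hbij : BijOn (pt s) (pr '' Z) (omegaLimitSet g c) := by
      rw [homega]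
      exact (hinj.mono hXgap).bijOn_image
    let f : (pr '' Z) ≃ omegaLimitSet g c := hbij.equiv (pt s)
    have hf : Continuous f :=
      ((pt_continuous hs).comp continuous_subtype_val).subtype_mk _
    exact ⟨hf.homeoOfEquivCompactToT2.symm⟩
  · have : CompactSpace Z := isCompact_iff_compactSpace.1 hcompZ
    have hmem : ∀ z ∈ Z, ∀ k : ℤ, pr (sh k z) ∈ pr '' Z := fun z hz k => ⟨_, hsh z hz k, rfl⟩
    let f : Z → Inhom g c := fun z => ⟨⟨fun k => pt s (pr (sh (-(k : ℤ)) z.1)), by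
      intro k
      rw [hg, tent_pt hs2 hsM h0.le (hXgap _ (hmem _ z.2 _))]
      congr 1
      funext i
      simp only [tl, pr, sh]
      exact congrArg z.1 (by push_cast; ring)⟩, by
      intro k
      rw [homega]
      exact ⟨_, hmem _ z.2 _, rfl⟩⟩
    have hf : Continuous f := by
      refine Continuous.subtype_mk (Continuous.subtype_mk (continuous_pi fun k => ?_) _) _
      exact (pt_continuous hs).comp (pr_continuous.comp ((sh_continuous _).comp
        continuous_subtype_val))
    have hfval : ∀ z k, ((f z).1 : ℕ → unitI) k = pt s (pr (sh (-(k : ℤ)) z.1)) := fun z k => rfl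
    have hfinj : Function.Injective f := by
      intro z z' h
      apply Subtype.ext
      funext i
      set k : ℕ := (-i).toNat with hk
      have h1 : pt s (pr (sh (-(k : ℤ)) z.1)) = pt s (pr (sh (-(k : ℤ)) z'.1)) := by
        rw [← hfval, ← hfval, h]
      have h2 := hinj (hXgap _ (hmem _ z.2 _)) (hXgap _ (hmem _ z'.2 _)) h1
      have h3 := congrFun h2 (i + k).toNat
      simp only [pr, sh] at h3
      have e : (((i + k).toNat : ℕ) : ℤ) + -(k : ℤ) = i := by omega
      rwa [e] at h3
    have hfsurj : Function.Surjective f := by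
      intro y
      have hy : ∀ k, ∃ a ∈ pr '' Z, pt s a = (y.1 : ℕ → unitI) k := by
        intro k
        have := y.2 k
        rwa [homega] at this
      choose a ha hay using hy
      have htla : ∀ k, tl (a (k + 1)) = a k := by
        intro k
        refine hinj (hXgap _ (ha _)).tl (hXgap _ (ha _)) ?_
        rw [hay, ← y.1.2 k, ← hay, hg, tent_pt hs2 hsM h0.le (hXgap _ (ha _))]
      have htla' : ∀ j k i, a (k + j) (i + j) = a k i := by
        intro j
        induction j with
        | zero => intro k i; rfl
        | succ j ih =>
          intro k i
          rw [← ih k i, ← htla (k + j)]; rfl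
      let z : ℤ → Bool := fun i => a (-i).toNat (i + (-i).toNat).toNat
      have hz : ∀ k : ℕ, pr (sh (-(k : ℤ)) z) = a k := by
        intro k
        funext i
        simp only [pr, sh, z]
        rcases le_total i k with h | h
        · have := htla' i (k - i) 0
          rw [zero_add, Nat.sub_add_cancel h] at this
          rw [this]
          congr 1
          · omega
          · omega
        · have := htla' k 0 (i - k)
          rw [zero_add, Nat.sub_add_cancel h] at this
          rw [this]
          congr 1
          · omega
          · omega
      have hzZ : z ∈ Z := by
        have hlimz : Tendsto (fun k : ℕ => sh k (Classical.choose (ha k))) atTop (𝓝 z) := by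
          rw [tendsto_pi_nhds]
          intro i
          refine tendsto_nhds_of_eventually_eq ?_
          filter_upwards [eventually_ge_atTop (-i).toNat] with k hk
          have h1 := (Classical.choose_spec (ha k)).2
          have h2 := congrFun (h1.trans (hz k).symm) (i + k).toNat
          simp only [pr, sh] at h2 ⊢
          have e : (((i + k).toNat : ℕ) : ℤ) = i + k := by omega
          rw [e] at h2
          rw [h2]
          congr 1
          ring
        exact hZ.mem_of_tendsto hlimz
          (Eventually.of_forall fun k => hsh _ (Classical.choose_spec (ha k)).1 _)
      refine ⟨⟨z, hzZ⟩, ?_⟩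
      apply Subtype.ext
      apply Subtype.ext
      funext k
      rw [hfval, hz, hay]
    exact ⟨(Continuous.homeoOfEquivCompactToT2
      (f := Equiv.ofBijective f ⟨hfinj, hfsurj⟩) hf).symm⟩

end Realization

/-! ### A sequence whose limit set is a given chain transitive set -/

section Chains

/-- If every target set `T i` can be reached from everywhere, then some infinite path visits all the
target sets. -/
lemma exists_path {V : Type*} (R : V → V → Prop) (T : ℕ → Set V) (v₀ : V)
    (h : ∀ v i, ∃ v' ∈ T i, Relation.TransGen R v v') :
    ∃ f : ℕ → V, (∀ k, R (f k) (f (k + 1))) ∧ ∀ i, ∃ k ≥ i, f k ∈ T i := by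
  -- `P i n v`: some path of length `n` leads from `v` to `T i`
  let P : ℕ → ℕ → V → Prop := fun i n =>
    Nat.rec (fun v => v ∈ T i) (fun _ Q v => ∃ v', R v v' ∧ Q v') n
  have hP : ∀ v i, ∃ n, P i (n + 1) v := by
    intro v i
    obtain ⟨v', hv', hR⟩ := h v i
    induction hR using Relation.TransGen.head_induction_on with
    | single hab => exact ⟨0, _, hab, hv'⟩
    | head hac _ ih =>
      obtain ⟨n, hn⟩ := ih
      exact ⟨n + 1, _, hac, hn⟩
  let S := {x : V × ℕ × ℕ // P x.2.1 x.2.2 x.1}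
  have step : ∀ x : S, ∃ y : S, R x.1.1 y.1.1 ∧
      (∀ m, x.1.2.2 = m + 1 → y.1.2 = (x.1.2.1, m)) ∧ (x.1.2.2 = 0 → y.1.2.1 = x.1.2.1 + 1) := by
    rintro ⟨⟨v, i, n⟩, hx⟩
    rcases n with _ | n
    · obtain ⟨n, v', hR, hn⟩ := hP v (i + 1)
      exact ⟨⟨(v', i + 1, n), hn⟩, hR, by simp, by simp⟩
    · obtain ⟨v', hR, hn⟩ := hx
      exact ⟨⟨(v', i, n), hn⟩, hR, by simp, by simp⟩
  choose nxt hR hn hz using step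
  obtain ⟨n₀, v₁, -, hv₁⟩ := hP v₀ 0
  let x₀ : S := ⟨(v₁, 0, n₀), hv₁⟩
  let F : ℕ → S := fun k => nxt^[k] x₀
  have hF : ∀ k, F (k + 1) = nxt (F k) := fun k => Function.iterate_succ_apply' _ _ _
  refine ⟨fun k => (F k).1.1, fun k => by simp only [hF]; exact hR _, ?_⟩
  have down : ∀ n k, (F k).1.2.2 = n → (F (k + n)).1.2 = ((F k).1.2.1, 0) := by
    intro n
    induction n with
    | zero => intro k hk; exact Prod.ext rfl hk
    | succ n ih =>
      intro k hk
      have h1 := hn (F k) n hk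
      rw [← hF] at h1
      have h2 := ih (k + 1) (by rw [h1])
      rw [show k + (n + 1) = k + 1 + n by omega, h2, h1]
  have visit : ∀ i, ∃ k ≥ i, (F k).1.2 = (i, 0) := by
    intro i
    induction i with
    | zero => exact ⟨0 + _, Nat.zero_le _, down _ 0 rfl⟩
    | succ i ih =>
      obtain ⟨k, hk, hki⟩ := ih
      have h1 := hz (F k) (by rw [hki])
      rw [← hF, hki] at h1
      have h2 := down _ (k + 1) rfl
      rw [h1] at h2
      exact ⟨_, by omega, h2⟩
  intro i
  obtain ⟨k, hk, hki⟩ := visit i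
  refine ⟨k, hk, ?_⟩
  have := (F k).2
  rw [hki] at this
  exact this

/-- A move inside `X` that follows the shift up to an error beyond the first `L` symbols. -/
def ChainStep (X : Set (ℕ → Bool)) (L : ℕ) (x y : ℕ → Bool) : Prop :=
  y ∈ X ∧ ∀ i < L, x (i + 1) = y i

lemma mem_closure_seq {S : Set (ℕ → Bool)} {a : ℕ → Bool} :
    a ∈ closure S ↔ ∀ L, ∃ b ∈ S, ∀ i < L, b i = a i := by
  constructor
  · intro h L
    have hN : {b : ℕ → Bool | ∀ i ∈ Finset.range L, b i = a i} ∈ 𝓝 a := by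
      have : ∀ᶠ b in 𝓝 a, ∀ i ∈ Finset.range L, b i = a i := by
        rw [Filter.eventually_all_finset]
        intro i _
        exact (continuous_apply i).continuousAt.eventually
          ((isOpen_discrete {a i}).mem_nhds rfl)
      exact this
    obtain ⟨b, hb, hbS⟩ := mem_closure_iff_nhds.1 h _ hN
    exact ⟨b, hbS, fun i hi => hb i (Finset.mem_range.2 hi)⟩
  · intro h
    choose b hb hba using h
    refine mem_closure_of_tendsto (f := b) (b := atTop) ?_ (Eventually.of_forall hb)
    rw [tendsto_pi_nhds]
    intro i
    refine tendsto_nhds_of_eventually_eq ?_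
    filter_upwards [eventually_gt_atTop i] with L hL
    exact hba L i hL

/-- If every point of `X` can be joined to `q` and from `q` by chains of every precision, then some
infinite chain with precision tending to infinity visits every cylinder of `X` infinitely often; its
sequence of first symbols has the limit set `X`. -/
theorem exists_limit_seq {X : Set (ℕ → Bool)} (hX : IsClosed X) {M : ℕ} (hgap : ∀ a ∈ X, Gap M a)
    {q : ℕ → Bool} (hq : q ∈ X)
    (hto : ∀ x ∈ X, ∀ L, Relation.TransGen (ChainStep X L) q x)
    (hfrom : ∀ x ∈ X, ∀ L, Relation.TransGen (ChainStep X L) x q) :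
    ∃ w : ℕ → Bool, Gap M w ∧ ⋂ K, closure {b | ∃ k ≥ K, shN k w = b} = X := by
  let R : X × ℕ → X × ℕ → Prop := fun a b => ChainStep X a.2 a.1.1 b.1.1 ∧ a.2 ≤ b.2
  let T : ℕ → Set (X × ℕ) := fun i => {b | i ≤ b.2 ∧
    ∀ u : List Bool, Encodable.encode u = i.unpair.1 →
      (∃ x ∈ X, ∀ j (hj : j < u.length), x j = u[j]) → ∀ j (hj : j < u.length), b.1.1 j = u[j]}
  have lift : ∀ (x y : ℕ → Bool) (hx : x ∈ X) (hy : y ∈ X) (L L' : ℕ), L ≤ L' →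
      Relation.TransGen (ChainStep X L) x y →
      Relation.TransGen R (⟨x, hx⟩, L) (⟨y, hy⟩, L') := by
    intro x y hx hy L L' hL h
    induction h generalizing L' with
    | single hab => exact .single ⟨hab, hL⟩
    | tail hab hbc ih =>
      rename_i b c
      have hb : b ∈ X := by
        cases hab with
        | single h => exact h.1
        | tail _ h => exact h.1
      exact (ih hb L le_rfl).tail ⟨hbc, hL⟩
  have reach : ∀ v i, ∃ v' ∈ T i, Relation.TransGen R v v' := by
    rintro ⟨⟨x, hx⟩, L⟩ i
    have hall : ∀ y ∈ X, Relation.TransGen (ChainStep X L) x y := fun y hy =>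
      (hfrom x hx L).trans (hto y hy L)
    by_cases hu : ∃ u : List Bool, Encodable.encode u = i.unpair.1 ∧
      ∃ x ∈ X, ∀ j (hj : j < u.length), x j = u[j]
    · obtain ⟨u, hu, y, hy, hyu⟩ := hu
      refine ⟨(⟨y, hy⟩, max L i), ⟨le_max_right _ _, fun u' hu' _ => ?_⟩,
        lift x y hx hy L _ (le_max_left _ _) (hall y hy)⟩
      rw [Encodable.encode_injective (hu'.trans hu.symm)]
      exact hyu
    · refine ⟨(⟨q, hq⟩, max L i), ⟨le_max_right _ _, fun u' hu' h => ?_⟩,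
        lift x q hx hq L _ (le_max_left _ _) (hall q hq)⟩
      exact absurd ⟨u', hu', h⟩ hu
  obtain ⟨f, hf, hfT⟩ := exists_path R T (⟨q, hq⟩, 0) reach
  let w : ℕ → Bool := fun k => (f k).1.1 0
  have hmono : Monotone fun k => (f k).2 := monotone_nat_of_le_succ fun k => (hf k).2
  -- `w` follows the `k`-th point of the path for as long as its precision lasts
  have hfollow : ∀ i k, i ≤ (f k).2 → w (k + i) = (f k).1.1 i := by
    intro i
    induction i with
    | zero => intro k _; rfl
    | succ i ih =>
      intro k hk
      have h1 : i ≤ (f (k + 1)).2 := by have := (hf k).2; omega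
      rw [show k + (i + 1) = k + 1 + i by omega, ih (k + 1) h1, (hf k).1.2 i (by omega)]
  have hlarge : ∀ L, ∃ K, ∀ k ≥ K, L ≤ (f k).2 := by
    intro L
    obtain ⟨k, -, hk⟩ := hfT L
    exact ⟨k, fun j hj => hk.1.trans (hmono hj)⟩
  obtain ⟨K₀, hK₀⟩ := hlarge M
  have hshN : ∀ k, shN k (shN K₀ w) = shN (K₀ + k) w := by
    intro k; funext i; simp only [shN]; congr 1; omega
  refine ⟨shN K₀ w, ?_, ?_⟩
  · intro k
    obtain ⟨i, hi, h⟩ := hgap _ (f (K₀ + k)).1.2 0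
    refine ⟨i, hi, ?_⟩
    rw [zero_add] at h
    rw [← h, ← hfollow i (K₀ + k) (hi.trans (hK₀ _ (by omega))), shN]
    congr 1; omega
  · apply Subset.antisymm
    · intro a ha
      rw [← hX.closure_eq, mem_closure_seq]
      intro L
      obtain ⟨K, hK⟩ := hlarge L
      obtain ⟨_, ⟨k, hk, rfl⟩, hka⟩ := mem_closure_seq.1 (mem_iInter.1 ha K) L
      refine ⟨_, (f (K₀ + k)).1.2, fun i hi => ?_⟩
      rw [← hka i hi, hshN, ← hfollow i (K₀ + k) (hi.le.trans (hK _ (by omega))), shN]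
    · intro a ha
      rw [mem_iInter]
      intro K
      rw [mem_closure_seq]
      intro L
      let u : List Bool := List.ofFn fun i : Fin L => a i
      set i : ℕ := Nat.pair (Encodable.encode u) (max (K₀ + K) L) with hi
      have hige : max (K₀ + K) L ≤ i := Nat.right_le_pair _ _
      obtain ⟨k, hk, hkT⟩ := hfT i
      refine ⟨_, ⟨k - K₀, by omega, rfl⟩, fun j hj => ?_⟩
      have h1 := hkT.2 u (by rw [hi, Nat.unpair_pair]) ⟨a, ha, by simp [u]⟩ j (by simpa [u] using hj)
      have h2 := hkT.1
      rw [hshN, shN, show K₀ + (k - K₀) = k by omega, hfollow j k (by omega), h1]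
      simp [u]

end Chains

/-! ### Families of sequences converging to a closed set -/

section Convergence

variable {I : Type*} {κ : Type*}

/-- On each finite window, all but finitely many of the sets `F k` look like `G`. -/
def Conv (G : Set (I → Bool)) (F : κ → Set (I → Bool)) : Prop :=
  ∀ s : Finset I, {k | ¬ ∀ x ∈ F k, ∃ g ∈ G, ∀ i ∈ s, x i = g i}.Finite

lemma Conv.locFinOff {G : Set (I → Bool)} {F : κ → Set (I → Bool)} (h : Conv G F)
    (hG : IsClosed G) : LocFinOff G F := by
  intro y hy
  obtain ⟨s, t, hst⟩ : ∃ (s : Finset I) (t : I → Set Bool),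
      y ∈ (s : Set I).pi t ∧ (s : Set I).pi t ⊆ Gᶜ := by
    obtain ⟨v, ⟨s, t, -, rfl⟩, h1, h2⟩ := (isTopologicalBasis_pi
      (fun _ : I => (isTopologicalBasis_singletons Bool))).exists_subset_of_mem_open
      (show y ∈ Gᶜ from hy) hG.isOpen_compl
    exact ⟨t, s, h1, h2⟩
  refine ⟨(s : Set I).pi fun i => {y i}, ?_, (h s).subset ?_⟩
  · refine set_pi_mem_nhds s.finite_toSet fun i _ => ?_
    exact (isOpen_discrete _).mem_nhds rfl
  · rintro k ⟨x, hxF, hxs⟩ hk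
    obtain ⟨g, hg, hxg⟩ := hk x hxF
    refine hst.2 (fun i hi => ?_) hg
    have : x i = y i := hxs i hi
    rw [← hxg i hi, this]
    exact hst.1 i hi

lemma Conv.mono {G G' : Set (I → Bool)} {F : κ → Set (I → Bool)} (h : Conv G F)
    (hG : G ⊆ G') : Conv G' F := fun s => (h s).subset fun k hk hk' => hk fun x hx => by
  obtain ⟨g, hg, h⟩ := hk' x hx
  exact ⟨g, hG hg, h⟩

/-- Convergence may be checked on the windows `[-L, L]`. -/
lemma conv_of_window {G : Set (ℤ → Bool)} {F : ℤ → Set (ℤ → Bool)} (c : ℤ)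
    (h : ∀ L : ℤ, 0 ≤ L → ∀ k, c * L < |k| → ∀ x ∈ F k, ∃ g ∈ G, ∀ i, |i| ≤ L → x i = g i) :
    Conv G F := by
  intro s
  obtain ⟨L, hL0, hL⟩ : ∃ L : ℤ, 0 ≤ L ∧ ∀ i ∈ s, |i| ≤ L := by
    refine ⟨∑ i ∈ s, |i|, Finset.sum_nonneg fun i _ => abs_nonneg i, fun i hi => ?_⟩
    exact Finset.single_le_sum (f := fun i : ℤ => |i|) (fun i _ => abs_nonneg i) hi
  refine (Set.finite_Icc (-(c * L)) (c * L)).subset fun k hk => ?_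
  by_contra hk'
  refine hk fun x hx => ?_
  have : c * L < |k| := by
    by_contra hc
    exact hk' (abs_le.1 (not_lt.1 hc))
  obtain ⟨g, hg, h'⟩ := h L hL0 k this x hx
  exact ⟨g, hg, fun i hi => h' i (hL i hi)⟩

lemma Conv.pr {G : Set (ℤ → Bool)} {F : κ → Set (ℤ → Bool)} (h : Conv G F) :
    Conv (pr '' G) fun k => pr '' F k := by
  classical
  intro s
  refine (h (s.image fun i : ℕ => (i : ℤ))).subset fun k hk hk' => hk ?_
  rintro _ ⟨x, hx, rfl⟩
  obtain ⟨g, hg, hxg⟩ := hk' x hx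
  exact ⟨_, ⟨g, hg, rfl⟩, fun i hi => hxg i (Finset.mem_image_of_mem _ hi)⟩

lemma CB_one_conv {G : Set (I → Bool)} {F : κ → Set (I → Bool)} (h : Conv G F) (hG : IsClosed G)
    (hF : ∀ k, (F k).Finite) :
    IsClosed (G ∪ ⋃ k, F k) ∧ CB (1 : Ordinal.{u}) (G ∪ ⋃ k, F k) ⊆ G := by
  refine ⟨(h.locFinOff hG).isClosed hG fun k => (hF k).isClosed, ?_⟩
  refine ((h.locFinOff hG).CB_subset hG (fun k => (hF k).isClosed) 1).trans ?_
  simp only [CB_finite le_rfl (hF _), iUnion_empty, union_empty]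
  exact subset_rfl

/-- If the sets `F k` converge to `G` and their `α`-th derivatives are in `G`, one more derivative
stays within the first derivative of `G`. -/
lemma CB_succ_conv {α : Ordinal.{u}} {G₀ G : Set (I → Bool)} {F : κ → Set (I → Bool)}
    (h : Conv G F) (hG : IsClosed G) (h1 : CB (1 : Ordinal.{u}) G ⊆ G₀) (hF : ∀ k, IsClosed (F k))
    (hFα : ∀ k, CB α (F k) ⊆ G) :
    IsClosed (G ∪ ⋃ k, F k) ∧ CB (α + 1) (G ∪ ⋃ k, F k) ⊆ G₀ := by
  refine ⟨(h.locFinOff hG).isClosed hG hF, ?_⟩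
  have hα : CB α (G ∪ ⋃ k, F k) ⊆ G :=
    ((h.locFinOff hG).CB_subset hG hF α).trans (union_subset subset_rfl (iUnion_subset hFα))
  intro x hx
  have h2 := (mem_CB_succ.1 hx).2
  have h3 : x ∈ closure (G \ {x}) := closure_mono (sdiff_subset_sdiff_left hα) h2
  refine h1 ?_
  rw [← zero_add (1 : Ordinal.{u}), mem_CB_succ, CB_zero]
  exact ⟨hG.closure_eq ▸ closure_mono sdiff_subset h3, h3⟩

end Convergence

/-! ### The sequences -/

section Sequences

open Ordinal

/-- The data from which the subshift is built: two periodic sequences `q` and `p` and a function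
`ε` which takes every value below `ω ^ α` infinitely often. -/
structure Blueprint (α : Ordinal.{u}) where
  /-- a common period of `q` and `p` -/
  N : ℕ
  two_le : 2 ≤ N
  /-- the first periodic sequence -/
  q : ℤ → Bool
  /-- the second periodic sequence -/
  p : ℤ → Bool
  hq : ∀ i j : ℤ, (N : ℤ) ∣ i - j → q i = q j
  hp : ∀ i j : ℤ, (N : ℤ) ∣ i - j → p i = p j
  hq1 : q 1 = true
  hp1 : p 1 = true
  /-- the code of the ordinals below `ω ^ α` -/
  ε : ℕ → Ordinal.{u}
  hε : ∀ j, ε j < ω ^ α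
  hε' : ∀ η < ω ^ α, ∀ J, ∃ j ≥ J, ε j = η
  hα : 1 ≤ α

namespace Blueprint

variable {α : Ordinal.{u}} (D : Blueprint α)

open Classical in
/-- The sequence `q` with the symbols at the positions in `T` changed. -/
def mk' (T : Set ℤ) (i : ℤ) : Bool := xor (D.q i) (decide (i ∈ T))

/-- The marked positions of `D.A ξ`. -/
def SA (ξ : Ordinal.{u}) : Set ℤ := {i | i = 0 ∨ ∃ j : ℕ, i = D.N * 2 ^ j ∧ ξ ≤ D.ε j}

/-- The marked positions of `D.B ξ`. -/
def SB (ξ : Ordinal.{u}) : Set ℤ := {i | ∃ j : ℕ, i = -(D.N * 2 ^ j) ∧ ξ ≤ D.ε j}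

/-- The sequence `q` with a mark at `0` and sparse marks to the right which encode `ξ`. -/
def A (ξ : Ordinal.{u}) : ℤ → Bool := D.mk' (D.SA ξ)

/-- The sequence `p` to the right, and to the left `q` with sparse marks which encode `ξ`. -/
def B (ξ : Ordinal.{u}) (i : ℤ) : Bool := if i < 0 then D.mk' (D.SB ξ) i else D.p i

/-- The sequence `q` with a single mark at `0`. -/
def E : ℤ → Bool := D.mk' {0}

/-- The sequence `q` to the left of `0` and `p` to the right. -/
def C (i : ℤ) : Bool := if i < 0 then D.q i else D.p i

/-- The sequence `p` to the left of `0` and `q` to the right. -/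
def P (i : ℤ) : Bool := if i < 0 then D.p i else D.q i

lemma mk'_of_mem {T : Set ℤ} {i : ℤ} (h : i ∈ T) : D.mk' T i = !D.q i := by
  simp [mk', h]

lemma mk'_of_notMem {T : Set ℤ} {i : ℤ} (h : i ∉ T) : D.mk' T i = D.q i := by
  simp [mk', h]

lemma N_pos : (0 : ℤ) < D.N := by have := D.two_le; omega

lemma A_top : D.A (ω ^ α) = D.E := by
  unfold A E
  congr 1
  ext i
  simp only [SA, mem_ofPred_eq, mem_singleton_iff, or_iff_left_iff_imp]
  rintro ⟨j, -, h⟩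
  exact absurd (D.hε j) (not_lt.2 h)

lemma B_top : D.B (ω ^ α) = D.C := by
  funext i
  unfold B C
  split_ifs
  · refine D.mk'_of_notMem ?_
    rintro ⟨j, -, h⟩
    exact absurd (D.hε j) (not_lt.2 h)
  · rfl

lemma continuous_decide_le (η : Ordinal.{u}) (b : Prop) :
    IsClopen {ξ : Ordinal.{u} | b ∧ ξ ≤ η} := by
  by_cases hb : b
  · have e : {ξ : Ordinal.{u} | b ∧ ξ ≤ η} = Iic η := by ext; simp [hb]
    rw [e]
    refine ⟨isClosed_Iic, ?_⟩
    have e' : Iic η = Iio (η + 1) := by ext x; simp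
    rw [e']; exact isOpen_Iio
  · have e : {ξ : Ordinal.{u} | b ∧ ξ ≤ η} = ∅ := by ext; simp [hb]
    rw [e]; exact isClopen_empty

lemma pow_inj {i j : ℕ} (h : (D.N : ℤ) * 2 ^ i = D.N * 2 ^ j) : i = j := by
  have h1 := mul_left_cancel₀ D.N_pos.ne' h
  exact Nat.pow_right_injective (le_refl 2) (by exact_mod_cast h1)

lemma mem_SA_pow {ξ : Ordinal.{u}} (j : ℕ) : (D.N * 2 ^ j : ℤ) ∈ D.SA ξ ↔ ξ ≤ D.ε j := by
  constructor
  · rintro (h | ⟨l, hl, h⟩)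
    · have := D.N_pos
      have : (0 : ℤ) < D.N * 2 ^ j := by positivity
      omega
    · rwa [D.pow_inj hl]
  · intro h; exact Or.inr ⟨j, rfl, h⟩

lemma mem_SB_pow {ξ : Ordinal.{u}} (j : ℕ) : (-(D.N * 2 ^ j) : ℤ) ∈ D.SB ξ ↔ ξ ≤ D.ε j := by
  constructor
  · rintro ⟨l, hl, h⟩
    rwa [D.pow_inj (neg_injective hl)]
  · intro h; exact ⟨j, rfl, h⟩

lemma mk'_continuous {S : Ordinal.{u} → Set ℤ} (i : ℤ) (h : IsClopen {ξ | i ∈ S ξ}) :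
    Continuous fun ξ => D.mk' (S ξ) i := by
  classical
  have : Continuous fun ξ => (decide (i ∈ S ξ) : Bool) := by
    rw [continuous_bool_rng true]
    convert h using 1
    ext ξ
    simp
  unfold mk'
  refine (continuous_of_discreteTopology (f := fun b : Bool => xor (D.q i) b)).comp ?_
  convert this

lemma A_continuous : Continuous D.A := by
  refine continuous_pi fun i => D.mk'_continuous i ?_
  by_cases h0 : i = 0
  · have : {ξ | i ∈ D.SA ξ} = Set.univ := eq_univ_of_forall fun ξ => Or.inl h0
    rw [this]; exact isClopen_univ
  by_cases h : ∃ j : ℕ, i = D.N * 2 ^ j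
  · obtain ⟨j, rfl⟩ := h
    simpa only [mem_SA_pow, true_and] using continuous_decide_le (D.ε j) True
  · have : {ξ | i ∈ D.SA ξ} = ∅ := by
      refine eq_empty_of_forall_notMem ?_
      rintro ξ (h' | ⟨j, hj, -⟩)
      · exact h0 h'
      · exact h ⟨j, hj⟩
    rw [this]; exact isClopen_empty

lemma B_continuous : Continuous D.B := by
  refine continuous_pi fun i => ?_
  unfold B
  split_ifs
  swap
  · exact continuous_const
  refine D.mk'_continuous i ?_
  by_cases h : ∃ j : ℕ, i = -(D.N * 2 ^ j)
  · obtain ⟨j, rfl⟩ := h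
    simpa only [mem_SB_pow, true_and] using continuous_decide_le (D.ε j) True
  · have : {ξ | i ∈ D.SB ξ} = ∅ := by
      refine eq_empty_of_forall_notMem ?_
      rintro ξ ⟨j, hj, -⟩
      exact h ⟨j, hj⟩
    rw [this]; exact isClopen_empty

lemma mk'_inj {T T' : Set ℤ} {i : ℤ} (h : D.mk' T i = D.mk' T' i) : i ∈ T ↔ i ∈ T' := by
  by_cases h1 : i ∈ T <;> by_cases h2 : i ∈ T'
  · simp [h1, h2]
  · rw [D.mk'_of_mem h1, D.mk'_of_notMem h2] at h; cases hq : D.q i <;> simp [hq] at h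
  · rw [D.mk'_of_notMem h1, D.mk'_of_mem h2] at h; cases hq : D.q i <;> simp [hq] at h
  · simp [h1, h2]

/-- The code `ε` separates the ordinals up to `ω ^ α`, also when restricted to large indices. -/
lemma code_inj {ξ ξ' : Ordinal.{u}} (h : ξ ≤ ω ^ α) (h' : ξ' ≤ ω ^ α) (J : ℕ)
    (hc : ∀ j ≥ J, ξ ≤ D.ε j ↔ ξ' ≤ D.ε j) : ξ = ξ' := by
  rcases lt_trichotomy ξ ξ' with hlt | heq | hlt
  · obtain ⟨j, hj, he⟩ := D.hε' ξ (hlt.trans_le h') J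
    exact absurd ((hc j hj).1 he.ge) (by rw [he]; exact not_le.2 hlt)
  · exact heq
  · obtain ⟨j, hj, he⟩ := D.hε' ξ' (hlt.trans_le h) J
    exact absurd ((hc j hj).2 he.ge) (by rw [he]; exact not_le.2 hlt)

lemma le_pow (j : ℕ) : (j : ℤ) < D.N * 2 ^ j := by
  have h1 : (j : ℤ) < 2 ^ j := by exact_mod_cast Nat.lt_two_pow_self
  have h2 := D.N_pos
  nlinarith

lemma prA_injOn (k : ℤ) : InjOn (fun ξ => pr (sh k (D.A ξ))) (Iic (ω ^ α)) := by
  intro ξ hξ ξ' hξ' h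
  refine D.code_inj hξ hξ' k.toNat fun j hj => ?_
  have hj' := D.le_pow j
  have h1 := congrFun h (D.N * 2 ^ j - k).toNat
  simp only [pr, sh, A] at h1
  rw [Int.toNat_of_nonneg (by omega), sub_add_cancel] at h1
  rw [← D.mem_SA_pow, ← D.mem_SA_pow, D.mk'_inj h1]

lemma A_injOn (k : ℤ) : InjOn (fun ξ => sh k (D.A ξ)) (Iic (ω ^ α)) := fun _ hξ _ hξ' h =>
  D.prA_injOn k hξ hξ' (congrArg pr h)

lemma B_injOn (k : ℤ) : InjOn (fun ξ => sh k (D.B ξ)) (Iic (ω ^ α)) := by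
  intro ξ hξ ξ' hξ' h
  refine D.code_inj hξ hξ' 0 fun j hj => ?_
  have h1 := congrFun h (-(D.N * 2 ^ j) - k)
  have hneg : (-(D.N * 2 ^ j) : ℤ) < 0 := by
    have := D.N_pos
    have : (0 : ℤ) < D.N * 2 ^ j := by positivity
    omega
  simp only [sh, B, sub_add_cancel, if_pos hneg] at h1
  rw [← D.mem_SB_pow, ← D.mem_SB_pow, D.mk'_inj h1]

lemma compact_Iic (o : Ordinal.{u}) : IsCompact (Iic o) := by
  have : Iic o = Icc 0 o := by ext x; simp
  rw [this]; exact isCompact_Icc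

/-- The shift by `k` of all the sequences `D.A ξ`. -/
def FA (k : ℤ) : Set (ℤ → Bool) := (fun ξ => sh k (D.A ξ)) '' Iic (ω ^ α)

/-- The shift by `k` of all the sequences `D.B ξ`. -/
def FB (k : ℤ) : Set (ℤ → Bool) := (fun ξ => sh k (D.B ξ)) '' Iic (ω ^ α)

lemma FA_compact (k : ℤ) : IsCompact (D.FA k) :=
  (compact_Iic _).image ((sh_continuous k).comp D.A_continuous)

lemma FB_compact (k : ℤ) : IsCompact (D.FB k) :=
  (compact_Iic _).image ((sh_continuous k).comp D.B_continuous)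

lemma α_ne (D : Blueprint α) : α ≠ 0 := (zero_lt_one.trans_le D.hα).ne'

lemma CB_FA (k : ℤ) : CB α (D.FA k) = {sh k D.E} := by
  rw [FA, CB_image (f := fun ξ => sh k (D.A ξ)) α (compact_Iic _)
    ((sh_continuous k).comp D.A_continuous).continuousOn
    (D.A_injOn k), CB_Iic_opow D.α_ne, image_singleton, D.A_top]

lemma CB_FB (k : ℤ) : CB α (D.FB k) = {sh k D.C} := by
  rw [FB, CB_image (f := fun ξ => sh k (D.B ξ)) α (compact_Iic _)
    ((sh_continuous k).comp D.B_continuous).continuousOn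
    (D.B_injOn k), CB_Iic_opow D.α_ne, image_singleton, D.B_top]

lemma CB_prFA (k : ℤ) : CB α (pr '' D.FA k) = {pr (sh k D.E)} := by
  rw [FA, image_image, CB_image (f := fun ξ => pr (sh k (D.A ξ))) α (compact_Iic _)
    (pr_continuous.comp ((sh_continuous k).comp D.A_continuous)).continuousOn
    (D.prA_injOn k), CB_Iic_opow D.α_ne, image_singleton, D.A_top]

end Blueprint

end Sequences

/-! ### The subshift and its derivatives -/

section Derivatives

open Ordinal

namespace Blueprint

variable {α : Ordinal.{u}} (D : Blueprint α)

/-- The orbit of a two-sided sequence under the shift. -/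
def orb (z : ℤ → Bool) : Set (ℤ → Bool) := range fun k => sh k z

/-- The union of the two periodic orbits. -/
def O : Set (ℤ → Bool) := orb D.q ∪ orb D.p

/-- The two periodic orbits together with the orbits of `D.E`, `D.C` and `D.P`. -/
def G1 : Set (ℤ → Bool) := D.O ∪ ⋃ k, {sh k D.E, sh k D.C, sh k D.P}

/-- The subshift consisting of the orbits of `D.q`, `D.p`, `D.P`, all `D.A ξ` and all `D.B ξ`;
it contains the orbits of `D.E` and `D.C` because these are `D.A (ω ^ α)` and `D.B (ω ^ α)`. -/
def Z : Set (ℤ → Bool) := D.G1 ∪ ⋃ k, (D.FA k ∪ D.FB k)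

lemma orb_finite {z : ℤ → Bool} (hz : ∀ i j : ℤ, (D.N : ℤ) ∣ i - j → z i = z j) :
    (orb z).Finite := by
  refine ((Set.finite_Ico (0 : ℤ) D.N).image fun k => sh k z).subset ?_
  rintro _ ⟨k, rfl⟩
  have := D.N_pos
  refine ⟨k % D.N, ⟨Int.emod_nonneg _ this.ne', Int.emod_lt_of_pos _ this⟩, ?_⟩
  funext i
  refine hz _ _ ?_
  rw [add_sub_add_left_eq_sub]
  exact Int.dvd_emod_sub_self

lemma O_finite : D.O.Finite := (D.orb_finite D.hq).union (D.orb_finite D.hp)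

/-- Distinct marks are far apart compared with their distance from `0`. -/
def Sparse (T : Set ℤ) : Prop :=
  (∀ a ∈ T, (D.N : ℤ) ∣ a) ∧ ∀ a ∈ T, ∀ b ∈ T, a ≠ b → |a| ≤ 2 * |a - b|

lemma pow_sparse {i j : ℕ} (h : i ≠ j) :
    |(D.N : ℤ) * 2 ^ i| ≤ 2 * |(D.N : ℤ) * 2 ^ i - D.N * 2 ^ j| := by
  have hN := D.N_pos
  rw [← _root_.mul_sub, abs_mul, abs_mul, abs_of_pos hN, mul_left_comm]
  refine mul_le_mul_of_nonneg_left ?_ hN.le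
  have hi : (0 : ℤ) < 2 ^ i := by positivity
  rw [abs_of_pos hi]
  rcases lt_or_gt_of_ne h with h | h
  · have : (2 : ℤ) ^ (i + 1) ≤ 2 ^ j := pow_le_pow_right₀ (by norm_num) h
    rw [pow_succ] at this
    rw [abs_sub_comm, abs_of_nonneg (by omega)]
    omega
  · have : (2 : ℤ) ^ (j + 1) ≤ 2 ^ i := pow_le_pow_right₀ (by norm_num) h
    rw [pow_succ] at this
    have hj : (0 : ℤ) < 2 ^ j := by positivity
    rw [abs_of_nonneg (by omega)]
    omega

lemma SA_sparse (ξ : Ordinal.{u}) : D.Sparse (D.SA ξ) := by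
  refine ⟨?_, ?_⟩
  · rintro a (rfl | ⟨j, rfl, -⟩)
    · exact dvd_zero _
    · exact dvd_mul_right _ _
  · rintro a (rfl | ⟨i, rfl, -⟩) b (rfl | ⟨j, rfl, -⟩) hab
    · simp
    · simp
    · have := abs_nonneg ((D.N : ℤ) * 2 ^ i)
      rw [_root_.sub_zero]; omega
    · exact D.pow_sparse fun h => hab (by rw [h])

lemma SB_sparse (ξ : Ordinal.{u}) : D.Sparse (D.SB ξ) := by
  refine ⟨?_, ?_⟩
  · rintro a ⟨j, rfl, -⟩
    exact (dvd_mul_right _ _).neg_right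
  · rintro a ⟨i, rfl, -⟩ b ⟨j, rfl, -⟩ hab
    rw [← neg_sub', abs_neg, abs_neg]
    exact D.pow_sparse fun h => hab (by rw [h])

/-- Far from `0`, a sequence with sparse marks shows at most one mark in a window. -/
lemma sparse_window {T : Set ℤ} (hT : D.Sparse T) {L k : ℤ} (hk : 5 * L < |k|) :
    ∃ g ∈ orb D.q ∪ orb D.E, ∀ i, |i| ≤ L → D.mk' T (i + k) = g i := by
  by_cases h : ∃ a ∈ T, |a - k| ≤ L
  · obtain ⟨a, ha, hak⟩ := h
    refine ⟨sh (k - a) D.E, Or.inr ⟨_, rfl⟩, fun i hi => ?_⟩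
    have hq : D.q (i + k) = D.q (i + (k - a)) := D.hq _ _ (by
      have := hT.1 a ha
      ring_nf; exact this)
    simp only [sh, E]
    by_cases hia : i + k ∈ T
    · rw [D.mk'_of_mem hia, D.mk'_of_mem, hq]
      by_contra hne
      have h1 := hT.2 a ha _ hia (fun h => hne (by rw [mem_singleton_iff]; omega))
      rw [abs_le] at hi hak
      have h2 : |a - (i + k)| ≤ 2 * L := by rw [abs_le]; omega
      have h3 : |k| ≤ |a| + L := by
        have := abs_sub_abs_le_abs_sub k a
        have h4 : |k - a| ≤ L := by rw [abs_le]; omega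
        omega
      omega
    · rw [D.mk'_of_notMem hia, D.mk'_of_notMem, hq]
      intro h
      rw [mem_singleton_iff] at h
      exact hia (by rwa [show i + k = a by omega])
  · refine ⟨sh k D.q, Or.inl ⟨_, rfl⟩, fun i hi => ?_⟩
    refine D.mk'_of_notMem fun hik => h ⟨_, hik, ?_⟩
    simpa using hi

lemma E_window {L k : ℤ} (hk : L < |k|) (i : ℤ) (hi : |i| ≤ L) : sh k D.E i = sh k D.q i := by
  refine D.mk'_of_notMem fun h => ?_
  rw [mem_singleton_iff] at h
  rw [show i = -k by omega, abs_neg] at hi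
  omega

lemma conv_E : Conv (orb D.q) fun k => {sh k D.E} := by
  refine conv_of_window 1 fun L hL k hk x hx => ?_
  rw [mem_singleton_iff.1 hx]
  exact ⟨_, ⟨k, rfl⟩, fun i hi => D.E_window (by omega) i hi⟩

lemma conv_P : Conv D.O fun k => {sh k D.P} := by
  refine conv_of_window 1 fun L hL k hk x hx => ?_
  rw [mem_singleton_iff.1 hx]
  rcases lt_or_ge k 0 with h | h
  · rw [abs_of_neg h] at hk
    refine ⟨_, Or.inr ⟨k, rfl⟩, fun i hi => if_pos ?_⟩
    have := (abs_le.1 hi).2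
    omega
  · rw [abs_of_nonneg h] at hk
    refine ⟨_, Or.inl ⟨k, rfl⟩, fun i hi => if_neg ?_⟩
    have := (abs_le.1 hi).1
    omega

lemma conv_O : Conv D.O fun k => {sh k D.E, sh k D.C, sh k D.P} := by
  refine conv_of_window 1 fun L hL k hk x hx => ?_
  rcases hx with rfl | rfl | rfl
  · exact ⟨_, Or.inl ⟨k, rfl⟩, fun i hi => D.E_window (by omega) i hi⟩
  · rcases lt_or_ge k 0 with h | h
    · rw [abs_of_neg h] at hk
      refine ⟨_, Or.inl ⟨k, rfl⟩, fun i hi => if_pos ?_⟩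
      have := (abs_le.1 hi).2
      omega
    · rw [abs_of_nonneg h] at hk
      refine ⟨_, Or.inr ⟨k, rfl⟩, fun i hi => if_neg ?_⟩
      have := (abs_le.1 hi).1
      omega
  · rcases lt_or_ge k 0 with h | h
    · rw [abs_of_neg h] at hk
      refine ⟨_, Or.inr ⟨k, rfl⟩, fun i hi => if_pos ?_⟩
      have := (abs_le.1 hi).2
      omega
    · rw [abs_of_nonneg h] at hk
      refine ⟨_, Or.inl ⟨k, rfl⟩, fun i hi => if_neg ?_⟩
      have := (abs_le.1 hi).1
      omega

lemma FA_window {L k : ℤ} (hk : 5 * L < |k|) {x : ℤ → Bool} (hx : x ∈ D.FA k) :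
    ∃ g ∈ orb D.q ∪ orb D.E, ∀ i, |i| ≤ L → x i = g i := by
  obtain ⟨ξ, -, rfl⟩ := hx
  exact D.sparse_window (D.SA_sparse ξ) hk

lemma FB_window_neg {L k : ℤ} (hk : 5 * L < |k|) (h : k < 0) {x : ℤ → Bool}
    (hx : x ∈ D.FB k) : ∃ g ∈ orb D.q ∪ orb D.E, ∀ i, |i| ≤ L → x i = g i := by
  obtain ⟨ξ, -, rfl⟩ := hx
  obtain ⟨g, hg, hg'⟩ := D.sparse_window (D.SB_sparse ξ) hk
  refine ⟨g, hg, fun i hi => ?_⟩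
  rw [← hg' i hi]
  refine if_pos ?_
  rw [abs_of_neg h] at hk
  have := (abs_le.1 hi).2
  omega

lemma orb_E_subset : orb D.q ∪ orb D.E ⊆ D.G1 := by
  refine union_subset (fun x hx => Or.inl (Or.inl hx)) ?_
  rintro _ ⟨k, rfl⟩
  exact Or.inr (mem_iUnion.2 ⟨k, Or.inl rfl⟩)

lemma conv_G1 : Conv D.G1 fun k => D.FA k ∪ D.FB k := by
  refine conv_of_window 5 fun L hL k hk x hx => ?_
  rcases hx with hx | hx
  · obtain ⟨g, hg, h⟩ := D.FA_window hk hx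
    exact ⟨g, D.orb_E_subset hg, h⟩
  · rcases lt_or_ge k 0 with h | h
    · obtain ⟨g, hg, h⟩ := D.FB_window_neg hk h hx
      exact ⟨g, D.orb_E_subset hg, h⟩
    · rw [abs_of_nonneg h] at hk
      obtain ⟨ξ, -, rfl⟩ := hx
      refine ⟨_, Or.inl (Or.inr ⟨k, rfl⟩), fun i hi => if_neg ?_⟩
      have := (abs_le.1 hi).1
      omega

lemma G1_closed : IsClosed D.G1 ∧ CB (1 : Ordinal.{u}) D.G1 ⊆ D.O :=
  CB_one_conv D.conv_O D.O_finite.isClosed fun k => by simp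

lemma Z_upper : IsClosed D.Z ∧ CB (α + 1) D.Z ⊆ D.O := by
  refine CB_succ_conv D.conv_G1 D.G1_closed.1 D.G1_closed.2
    (fun k => (D.FA_compact k).isClosed.union (D.FB_compact k).isClosed) fun k => ?_
  refine (CB_union α (D.FA_compact k).isClosed (D.FB_compact k).isClosed).trans ?_
  rw [D.CB_FA, D.CB_FB]
  rintro x (hx | hx)
  · exact Or.inr (mem_iUnion.2 ⟨k, Or.inl hx⟩)
  · exact Or.inr (mem_iUnion.2 ⟨k, Or.inr (Or.inl hx)⟩)

lemma FA_subset (k : ℤ) : D.FA k ⊆ D.Z := fun _ hx =>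
  Or.inr (mem_iUnion.2 ⟨k, Or.inl hx⟩)

lemma FB_subset (k : ℤ) : D.FB k ⊆ D.Z := fun _ hx =>
  Or.inr (mem_iUnion.2 ⟨k, Or.inr hx⟩)

lemma q_mem (k : ℤ) : sh k D.q ∈ D.Z := Or.inl (Or.inl (Or.inl ⟨k, rfl⟩))

lemma p_mem (k : ℤ) : sh k D.p ∈ D.Z := Or.inl (Or.inl (Or.inr ⟨k, rfl⟩))

lemma P_mem (k : ℤ) : sh k D.P ∈ D.Z :=
  Or.inl (Or.inr (mem_iUnion.2 ⟨k, Or.inr (Or.inr rfl)⟩))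

/-- Every point of the subshift is a shift of one of the defining sequences. -/
lemma Z_cases {z : ℤ → Bool} (hz : z ∈ D.Z) : (∃ k, z = sh k D.q) ∨ (∃ k, z = sh k D.p) ∨
    (∃ k, z = sh k D.P) ∨ (∃ k, ∃ ξ ≤ ω ^ α, z = sh k (D.A ξ)) ∨
    ∃ k, ∃ ξ ≤ ω ^ α, z = sh k (D.B ξ) := by
  rcases hz with ((⟨k, rfl⟩ | ⟨k, rfl⟩) | hz) | hz
  · exact Or.inl ⟨k, rfl⟩
  · exact Or.inr (Or.inl ⟨k, rfl⟩)
  · obtain ⟨k, rfl | rfl | rfl⟩ := mem_iUnion.1 hz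
    · exact Or.inr (Or.inr (Or.inr (Or.inl ⟨k, _, le_rfl, by rw [A_top]⟩)))
    · exact Or.inr (Or.inr (Or.inr (Or.inr ⟨k, _, le_rfl, by rw [B_top]⟩)))
    · exact Or.inr (Or.inr (Or.inl ⟨k, rfl⟩))
  · obtain ⟨k, ⟨ξ, hξ, rfl⟩ | ⟨ξ, hξ, rfl⟩⟩ := mem_iUnion.1 hz
    · exact Or.inr (Or.inr (Or.inr (Or.inl ⟨k, ξ, hξ, rfl⟩)))
    · exact Or.inr (Or.inr (Or.inr (Or.inr ⟨k, ξ, hξ, rfl⟩)))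

lemma A_mem (k : ℤ) {ξ : Ordinal.{u}} (h : ξ ≤ ω ^ α) : sh k (D.A ξ) ∈ D.Z :=
  D.FA_subset k ⟨ξ, h, rfl⟩

lemma B_mem (k : ℤ) {ξ : Ordinal.{u}} (h : ξ ≤ ω ^ α) : sh k (D.B ξ) ∈ D.Z :=
  D.FB_subset k ⟨ξ, h, rfl⟩

lemma Z_sh {z : ℤ → Bool} (hz : z ∈ D.Z) (k : ℤ) : sh k z ∈ D.Z := by
  rcases D.Z_cases hz with ⟨l, rfl⟩ | ⟨l, rfl⟩ | ⟨l, rfl⟩ | ⟨l, ξ, h, rfl⟩ | ⟨l, ξ, h, rfl⟩ <;>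
    rw [sh_sh]
  · exact D.q_mem _
  · exact D.p_mem _
  · exact D.P_mem _
  · exact D.A_mem _ h
  · exact D.B_mem _ h

lemma sh_period {z : ℤ → Bool} (hz : ∀ i j : ℤ, (D.N : ℤ) ∣ i - j → z i = z j) (i j : ℤ) :
    sh (i + D.N * j) z = sh i z := by
  funext t
  exact hz _ _ ⟨j, by ring⟩

lemma tendsto_E (i : ℤ) : Tendsto (fun j : ℕ => sh (i - D.N * j) D.E) atTop (𝓝 (sh i D.q)) := by
  rw [tendsto_pi_nhds]
  intro t
  refine tendsto_const_nhds.congr' ?_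
  filter_upwards [eventually_ge_atTop (t + i).natAbs.succ] with j hj
  have hN := D.N_pos
  have h1 : (j : ℤ) ≤ D.N * j := by nlinarith
  have h2 : sh (i - D.N * j) D.E t = D.q (t + (i - D.N * j)) := D.mk'_of_notMem fun h => by
    rw [mem_singleton_iff] at h
    omega
  rw [h2]
  exact D.hq _ _ ⟨j, by ring⟩

lemma E_ne (i : ℤ) (j : ℕ) : sh (i - D.N * j) D.E (D.N * j - i) ≠ sh i D.q (D.N * j - i) := by
  have h1 : sh (i - D.N * j) D.E (D.N * j - i) = !D.q 0 := by
    simp only [sh, E]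
    rw [show (D.N * j - i + (i - D.N * j) : ℤ) = 0 by ring]
    exact D.mk'_of_mem rfl
  have h2 : sh i D.q (D.N * j - i) = D.q 0 := D.hq _ _ ⟨j, by ring⟩
  rw [h1, h2]
  simp

lemma q_mem_CB (i : ℤ) : sh i D.q ∈ CB (α + 1) D.Z := by
  refine mem_CB_succ.2 ⟨D.q_mem i, mem_closure_of_tendsto (D.tendsto_E i) (.of_forall fun j => ?_)⟩
  refine ⟨CB_mono α (D.FA_subset _) (by rw [D.CB_FA]; rfl), fun h => ?_⟩
  exact D.E_ne i j (congrFun h _)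

lemma tendsto_C (i : ℤ) : Tendsto (fun j : ℕ => sh (i + D.N * j) D.C) atTop (𝓝 (sh i D.p)) := by
  rw [tendsto_pi_nhds]
  intro t
  refine tendsto_const_nhds.congr' ?_
  filter_upwards [eventually_ge_atTop (t + i).natAbs] with j hj
  have hN := D.N_pos
  have h1 : (j : ℤ) ≤ D.N * j := by nlinarith
  have h2 : sh (i + D.N * j) D.C t = D.p (t + (i + D.N * j)) := if_neg (by omega)
  rw [h2]
  exact D.hp _ _ ⟨-j, by ring⟩

lemma p_mem_CB (i : ℤ) : sh i D.p ∈ CB (α + 1) D.Z := by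
  by_cases hpq : D.p = D.q
  · rw [hpq]; exact D.q_mem_CB i
  refine mem_CB_succ.2 ⟨D.p_mem i, mem_closure_of_tendsto (D.tendsto_C i) (.of_forall fun j => ?_)⟩
  refine ⟨CB_mono α (D.FB_subset _) (by rw [D.CB_FB]; rfl), fun h => hpq ?_⟩
  rw [mem_singleton_iff, ← D.sh_period D.hp i j] at h
  funext t
  have hN := D.N_pos
  -- a position congruent to `t` at which `D.C` is given by `D.q`
  have hneg : t - D.N * (|t| + 1) < 0 := by
    have := le_abs_self t
    have := abs_nonneg t
    nlinarith
  have h1 := congrFun h (t - D.N * (|t| + 1) - (i + D.N * j))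
  simp only [sh, sub_add_cancel, C, if_pos hneg] at h1
  rw [D.hp t (t - D.N * (|t| + 1)) ⟨|t| + 1, by ring⟩, ← h1]
  exact D.hq _ _ ⟨-(|t| + 1), by ring⟩

lemma CB_Z : CB (α + 1) D.Z = D.O := by
  refine Subset.antisymm D.Z_upper.2 ?_
  rintro _ (⟨i, rfl⟩ | ⟨i, rfl⟩)
  · exact D.q_mem_CB i
  · exact D.p_mem_CB i

/-- The restrictions of the sequences `sh k (D.B ξ)` agree from the position `|k|` on, so there are
only finitely many of them. -/
lemma prFB_finite (k : ℤ) : (pr '' D.FB k).Finite := by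
  refine Set.Finite.of_finite_image (f := fun x (i : Fin k.natAbs) => x i) (toFinite _) ?_
  rintro _ ⟨_, ⟨ξ, -, rfl⟩, rfl⟩ _ ⟨_, ⟨ξ', -, rfl⟩, rfl⟩ h
  funext i
  by_cases hi : i < k.natAbs
  · exact congrFun h ⟨i, hi⟩
  · simp only [pr, sh, B]
    rw [if_neg (by omega), if_neg (by omega)]

lemma prFB_nonneg {k : ℤ} (hk : 0 ≤ k) {x : ℤ → Bool} (hx : x ∈ D.FB k) :
    pr x = pr (sh k D.p) := by
  obtain ⟨ξ, -, rfl⟩ := hx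
  funext i
  exact if_neg (by omega)

/-- The shifts of the sequences `D.A ξ`, and the shifts of the sequences `D.B ξ` which show
part of their left half at the nonnegative positions. -/
def FS (k : ℤ) : Set (ℤ → Bool) := D.FA k ∪ if k < 0 then D.FB k else ∅

lemma conv_FS : Conv (orb D.q ∪ orb D.E) D.FS := by
  refine conv_of_window 5 fun L hL k hk x hx => ?_
  rcases hx with hx | hx
  · exact D.FA_window hk hx
  · split_ifs at hx with h
    · exact D.FB_window_neg hk h hx
    · exact hx.elim

lemma prFS_closed (k : ℤ) : IsClosed (pr '' D.FS k) ∧ CB α (pr '' D.FS k) ⊆ {pr (sh k D.E)} := by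
  have h1 : IsClosed (pr '' D.FA k) := ((D.FA_compact k).image pr_continuous).isClosed
  have h2 : (pr '' (if k < 0 then D.FB k else ∅)).Finite := by
    split_ifs
    · exact D.prFB_finite k
    · simp
  have e : pr '' D.FS k = pr '' D.FA k ∪ pr '' (if k < 0 then D.FB k else ∅) := by
    rw [← image_union, FS]
  rw [e]
  refine ⟨h1.union h2.isClosed, (CB_union α h1 h2.isClosed).trans ?_⟩
  rw [D.CB_prFA, CB_finite D.hα h2, union_empty]

lemma prE_eq : pr '' (orb D.q ∪ orb D.E) = pr '' orb D.q ∪ ⋃ k, pr '' {sh k D.E} := by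
  rw [image_union, ← image_iUnion]
  congr 2
  ext x
  simp [orb, eq_comm]

/-- The part of the one-sided subshift coming from `D.FS`: only the orbit of `D.q` survives. -/
lemma S_upper : IsClosed (pr '' (orb D.q ∪ orb D.E) ∪ ⋃ k, pr '' D.FS k) ∧
    CB (α + 1) (pr '' (orb D.q ∪ orb D.E) ∪ ⋃ k, pr '' D.FS k) ⊆ pr '' orb D.q := by
  have h1 := CB_one_conv.{u} D.conv_E.pr ((D.orb_finite D.hq).image pr).isClosed fun k => by simp
  rw [← D.prE_eq] at h1
  refine CB_succ_conv D.conv_FS.pr h1.1 h1.2 (fun k => (D.prFS_closed k).1) fun k => ?_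
  refine (D.prFS_closed k).2.trans ?_
  rintro _ rfl
  exact ⟨_, Or.inr ⟨k, rfl⟩, rfl⟩

/-- The rest of the one-sided subshift does not contribute to the derivative of order `α + 1`. -/
lemma R_upper : IsClosed (pr '' D.O ∪ ⋃ k, pr '' {sh k D.P}) ∧
    CB (α + 1) (pr '' D.O ∪ ⋃ k, pr '' {sh k D.P}) ⊆ ∅ := by
  have hO := D.O_finite.image pr
  refine CB_succ_conv D.conv_P.pr hO.isClosed (CB_finite le_rfl hO).subset
    (fun k => by simp) fun k => ?_
  rw [CB_finite D.hα (by simp)]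
  exact empty_subset _

lemma X_subset : pr '' D.Z ⊆ (pr '' (orb D.q ∪ orb D.E) ∪ ⋃ k, pr '' D.FS k) ∪
    (pr '' D.O ∪ ⋃ k, pr '' {sh k D.P}) := by
  rintro _ ⟨z, hz, rfl⟩
  rcases D.Z_cases hz with ⟨k, rfl⟩ | ⟨k, rfl⟩ | ⟨k, rfl⟩ | ⟨k, ξ, h, rfl⟩ | ⟨k, ξ, h, rfl⟩
  · exact Or.inr (Or.inl ⟨_, Or.inl ⟨k, rfl⟩, rfl⟩)
  · exact Or.inr (Or.inl ⟨_, Or.inr ⟨k, rfl⟩, rfl⟩)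
  · exact Or.inr (Or.inr (mem_iUnion.2 ⟨k, _, rfl, rfl⟩))
  · exact Or.inl (Or.inr (mem_iUnion.2 ⟨k, _, Or.inl ⟨ξ, h, rfl⟩, rfl⟩))
  · by_cases hk : k < 0
    · refine Or.inl (Or.inr (mem_iUnion.2 ⟨k, _, Or.inr ?_, rfl⟩))
      rw [if_pos hk]
      exact ⟨ξ, h, rfl⟩
    · rw [D.prFB_nonneg (not_lt.1 hk) ⟨ξ, h, rfl⟩]
      exact Or.inr (Or.inl ⟨_, Or.inr ⟨k, rfl⟩, rfl⟩)

lemma X_closed : IsClosed (pr '' D.Z) :=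
  (D.Z_upper.1.isCompact.image pr_continuous).isClosed

lemma CB_X : CB (α + 1) (pr '' D.Z) = pr '' orb D.q := by
  refine Subset.antisymm ?_ ?_
  · refine ((CB_mono _ D.X_subset).trans (CB_union _ D.S_upper.1 D.R_upper.1)).trans ?_
    exact union_subset D.S_upper.2 (D.R_upper.2.trans (empty_subset _))
  · rintro _ ⟨_, ⟨i, rfl⟩, rfl⟩
    refine mem_CB_succ.2 ⟨⟨_, D.q_mem i, rfl⟩, mem_closure_of_tendsto
      ((pr_continuous.tendsto _).comp (D.tendsto_E i)) ?_⟩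
    filter_upwards [eventually_ge_atTop i.natAbs] with j hj
    refine ⟨CB_mono α (image_mono (D.FA_subset _)) (by rw [D.CB_prFA]; rfl), fun h => ?_⟩
    have hN := D.N_pos
    have h1 : (j : ℤ) ≤ D.N * j := by nlinarith
    refine D.E_ne i j ?_
    have h2 := congrFun h (D.N * j - i).toNat
    simp only [Function.comp, pr] at h2
    rwa [Int.toNat_of_nonneg (by omega)] at h2

end Blueprint

end Derivatives

/-! ### Chains in the subshift -/

section Chains

open Ordinal

namespace Blueprint

variable {α : Ordinal.{u}} (D : Blueprint α)

/-- The positions congruent to `1` are never changed, hence carry the symbol `true`. -/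
lemma eq_true_of_one {z : ℤ → Bool} (hz : z ∈ D.Z) :
    ∃ k : ℤ, ∀ i : ℤ, (D.N : ℤ) ∣ i + k - 1 → z i = true := by
  have hN : ∀ {t : ℤ}, (D.N : ℤ) ∣ t - 1 → ¬ (D.N : ℤ) ∣ t := fun h1 h2 => by
    have h3 : (D.N : ℤ) ∣ 1 := by simpa using _root_.dvd_sub h2 h1
    have h4 := Int.le_of_dvd one_pos h3
    have := D.two_le
    omega
  have hmk : ∀ {T : Set ℤ}, D.Sparse T → ∀ t : ℤ, (D.N : ℤ) ∣ t - 1 → D.mk' T t = true := by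
    intro T hT t ht
    rw [D.mk'_of_notMem fun h => hN ht (hT.1 t h), D.hq t 1 ht, D.hq1]
  have hq : ∀ t : ℤ, (D.N : ℤ) ∣ t - 1 → D.q t = true := fun t ht => (D.hq t 1 ht).trans D.hq1
  have hp : ∀ t : ℤ, (D.N : ℤ) ∣ t - 1 → D.p t = true := fun t ht => (D.hp t 1 ht).trans D.hp1
  rcases D.Z_cases hz with ⟨k, rfl⟩ | ⟨k, rfl⟩ | ⟨k, rfl⟩ | ⟨k, ξ, -, rfl⟩ | ⟨k, ξ, -, rfl⟩ <;>
    refine ⟨k, fun i hi => ?_⟩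
  · exact hq _ hi
  · exact hp _ hi
  · simp only [sh, P]
    split_ifs
    exacts [hp _ hi, hq _ hi]
  · exact hmk (D.SA_sparse ξ) _ hi
  · simp only [sh, B]
    split_ifs
    exacts [hmk (D.SB_sparse ξ) _ hi, hp _ hi]

lemma Z_gap {z : ℤ → Bool} (hz : z ∈ D.Z) : Gap D.N (pr z) := by
  obtain ⟨k, hk⟩ := D.eq_true_of_one hz
  intro l
  have hN := D.N_pos
  have h1 := Int.emod_nonneg (1 - l - k) hN.ne'
  have h2 := Int.emod_lt_of_pos (1 - l - k) hN
  refine ⟨((1 - l - k) % D.N).toNat, by omega, hk _ ?_⟩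
  push_cast
  rw [Int.toNat_of_nonneg h1]
  have h3 : (D.N : ℤ) ∣ (1 - l - k) % D.N - (1 - l - k) := Int.dvd_emod_sub_self
  rw [show ((l : ℤ) + (1 - l - k) % D.N + k - 1) = (1 - l - k) % D.N - (1 - l - k) by ring]
  exact h3

/-- There are chains from `z` to `z'` in the one-sided subshift, for every precision. -/
def Chain (z z' : ℤ → Bool) : Prop :=
  ∀ L, Relation.TransGen (ChainStep (pr '' D.Z) L) (pr z) (pr z')

lemma Chain.trans {z z' z'' : ℤ → Bool} (h : D.Chain z z') (h' : D.Chain z' z'') :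
    D.Chain z z'' := fun L => (h L).trans (h' L)

lemma chain_shift {z : ℤ → Bool} (hz : z ∈ D.Z) (L a : ℕ) :
    Relation.ReflTransGen (ChainStep (pr '' D.Z) L) (pr z) (pr (sh a z)) := by
  induction a with
  | zero => rw [Nat.cast_zero, sh_zero]
  | succ a ih =>
    refine ih.tail ⟨⟨_, D.Z_sh hz _, rfl⟩, fun i _ => ?_⟩
    simp only [pr, sh]
    congr 1
    push_cast
    ring

/-- A chain which follows the orbit of `z`, jumps once, and then follows the orbit of `z'`. -/
lemma chain_of_agree {z z' : ℤ → Bool} (hz : z ∈ D.Z) (hz' : z' ∈ D.Z)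
    (h : ∀ L : ℕ, ∃ a b : ℤ, 1 ≤ a ∧ 0 ≤ b ∧ ∀ i : ℤ, 0 ≤ i → i < L → z (a + i) = z' (i - b)) :
    D.Chain z z' := by
  intro L
  obtain ⟨a, b, ha, hb, hab⟩ := h L
  lift b to ℕ using hb
  obtain ⟨c, rfl⟩ : ∃ c : ℕ, a = c + 1 := ⟨(a - 1).toNat, by omega⟩
  have h1 := D.chain_shift hz L c
  have h2 := D.chain_shift (D.Z_sh hz' (-b)) L b
  rw [sh_sh, add_neg_cancel, sh_zero] at h2
  refine (Relation.TransGen.tail' h1 ⟨⟨_, D.Z_sh hz' (-b), rfl⟩, fun i hi => ?_⟩).trans_left h2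
  have := hab i (by omega) (by omega)
  simp only [pr, sh]
  push_cast
  rw [← sub_eq_add_neg, ← this]
  congr 1
  ring

lemma exists_far (k : ℤ) : ∃ r : ℤ, |k| < D.N * r := by
  refine ⟨|k| + 1, ?_⟩
  have := D.N_pos
  have := abs_nonneg k
  nlinarith

lemma q_mem' : D.q ∈ D.Z := by simpa only [sh_zero] using D.q_mem 0

lemma p_mem' : D.p ∈ D.Z := by simpa only [sh_zero] using D.p_mem 0

lemma P_mem' : D.P ∈ D.Z := by simpa only [sh_zero] using D.P_mem 0

lemma C_mem' : D.C ∈ D.Z := by simpa only [sh_zero, B_top] using D.B_mem 0 le_rfl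

lemma chain_q_q (k : ℤ) : D.Chain D.q (sh k D.q) := by
  refine D.chain_of_agree D.q_mem' (D.q_mem k) fun L => ?_
  obtain ⟨r, hr⟩ := D.exists_far (|k| + 1)
  have hk := abs_le.1 (le_refl |k|)
  rw [abs_of_nonneg (by omega)] at hr
  exact ⟨k + D.N * r, 0, by omega, le_rfl, fun i _ _ => D.hq _ _ ⟨r, by ring⟩⟩

lemma chain_q_A (k : ℤ) {ξ : Ordinal.{u}} (hξ : ξ ≤ ω ^ α) : D.Chain D.q (sh k (D.A ξ)) := by
  refine D.chain_of_agree D.q_mem' (D.A_mem k hξ) fun L => ?_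
  obtain ⟨r, hr⟩ := D.exists_far (|k| + L + 1)
  have hk := abs_le.1 (le_refl |k|)
  rw [abs_of_nonneg (by omega)] at hr
  refine ⟨k + D.N * r, D.N * r, by omega, by omega, fun i h0 hi => ?_⟩
  have h1 : sh k (D.A ξ) (i - D.N * r) = D.q (i - D.N * r + k) := by
    refine D.mk'_of_notMem ?_
    have := D.N_pos
    rintro (h | ⟨j, h, -⟩)
    · omega
    · have : (0 : ℤ) < D.N * 2 ^ j := by positivity
      omega
  rw [h1]
  exact D.hq _ _ ⟨2 * r, by ring⟩

lemma pow_gap {j l : ℕ} : (D.N * 2 ^ l : ℤ) ≤ D.N * 2 ^ j ∨ (2 * (D.N * 2 ^ j) : ℤ) ≤ D.N * 2 ^ l := by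
  have hN := D.N_pos
  rcases Nat.lt_or_ge j l with h | h
  · have : (2 : ℤ) ^ (j + 1) ≤ 2 ^ l := pow_le_pow_right₀ (by norm_num) h
    rw [pow_succ] at this
    right; nlinarith
  · have : (2 : ℤ) ^ l ≤ 2 ^ j := pow_le_pow_right₀ (by norm_num) h
    left; nlinarith

lemma chain_q_B (k : ℤ) {ξ : Ordinal.{u}} (hξ : ξ ≤ ω ^ α) : D.Chain D.q (sh k (D.B ξ)) := by
  refine D.chain_of_agree D.q_mem' (D.B_mem k hξ) fun L => ?_
  have hk := abs_le.1 (le_refl |k|)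
  -- the window lies strictly between the possible marks at `-2 * N * 2 ^ j` and `-N * 2 ^ j`
  have hj := D.le_pow (L + k.natAbs + 1)
  set s : ℤ := D.N * 2 ^ (L + k.natAbs + 1) with hs
  push_cast at hj
  refine ⟨1, k + 2 * s - 1, le_rfl, by omega, fun i h0 hi => ?_⟩
  have h1 : sh k (D.B ξ) (i - (k + 2 * s - 1)) = D.q (i - (k + 2 * s - 1) + k) := by
    refine (if_pos (by omega)).trans (D.mk'_of_notMem ?_)
    rintro ⟨l, h, -⟩
    have := D.pow_gap (j := L + k.natAbs + 1) (l := l)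
    rw [← hs] at this
    omega
  rw [h1]
  exact D.hq _ _ ⟨2 * 2 ^ (L + k.natAbs + 1), by rw [hs]; ring⟩

lemma chain_C_p (k : ℤ) : D.Chain D.C (sh k D.p) := by
  refine D.chain_of_agree D.C_mem' (D.p_mem k) fun L => ?_
  obtain ⟨r, hr⟩ := D.exists_far (|k| + 1)
  have hk := abs_le.1 (le_refl |k|)
  rw [abs_of_nonneg (by omega)] at hr
  exact ⟨k + D.N * r, 0, by omega, le_rfl, fun i _ _ => (if_neg (by omega)).trans
    (D.hp _ _ ⟨r, by ring⟩)⟩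

lemma chain_C_P (k : ℤ) : D.Chain D.C (sh k D.P) := by
  refine D.chain_of_agree D.C_mem' (D.P_mem k) fun L => ?_
  obtain ⟨r, hr⟩ := D.exists_far (|k| + L + 1)
  have hk := abs_le.1 (le_refl |k|)
  rw [abs_of_nonneg (by omega)] at hr
  refine ⟨k + D.N * r, D.N * r, by omega, by omega, fun i h0 hi => ?_⟩
  have h1 : sh k D.P (i - D.N * r) = D.p (i - D.N * r + k) := if_pos (by omega)
  rw [h1]
  exact (if_neg (by omega)).trans (D.hp _ _ ⟨2 * r, by ring⟩)

lemma chain_to_q (k : ℤ) {z : ℤ → Bool} (hz : sh k z ∈ D.Z) (h : ∀ i ≥ 0, z i = D.q i) :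
    D.Chain (sh k z) D.q := by
  refine D.chain_of_agree hz D.q_mem' fun L => ?_
  obtain ⟨r, hr⟩ := D.exists_far (|k| + 1)
  have hk := abs_le.1 (le_refl |k|)
  rw [abs_of_nonneg (by omega)] at hr
  exact ⟨D.N * r - k, 0, by omega, le_rfl, fun i _ _ => (h _ (by omega)).trans
    (D.hq _ _ ⟨r, by ring⟩)⟩

lemma chain_to_p (k : ℤ) {z : ℤ → Bool} (hz : sh k z ∈ D.Z) (h : ∀ i ≥ 0, z i = D.p i) :
    D.Chain (sh k z) D.p := by
  refine D.chain_of_agree hz D.p_mem' fun L => ?_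
  obtain ⟨r, hr⟩ := D.exists_far (|k| + 1)
  have hk := abs_le.1 (le_refl |k|)
  rw [abs_of_nonneg (by omega)] at hr
  exact ⟨D.N * r - k, 0, by omega, le_rfl, fun i _ _ => (h _ (by omega)).trans
    (D.hp _ _ ⟨r, by ring⟩)⟩

lemma chain_p_P : D.Chain D.p D.P := by
  refine D.chain_of_agree D.p_mem' D.P_mem' fun L => ?_
  obtain ⟨r, hr⟩ := D.exists_far L
  rw [abs_of_nonneg (by omega)] at hr
  have hN := D.N_pos
  refine ⟨D.N, D.N * r, by omega, by omega, fun i h0 hi => ?_⟩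
  have h1 : D.P (i - D.N * r) = D.p (i - D.N * r) := if_pos (by omega)
  rw [h1]
  exact D.hp _ _ ⟨1 + r, by ring⟩

lemma chain_p_q : D.Chain D.p D.q := by
  refine Chain.trans D D.chain_p_P ?_
  have := D.chain_to_q 0 (D.P_mem 0) fun i hi => if_neg (not_lt.2 hi)
  rwa [sh_zero] at this

lemma chain_A_q (k : ℤ) {ξ : Ordinal.{u}} (hξ : ξ ≤ ω ^ α) : D.Chain (sh k (D.A ξ)) D.q := by
  refine D.chain_of_agree (D.A_mem k hξ) D.q_mem' fun L => ?_
  have hk := abs_le.1 (le_refl |k|)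
  -- the window lies strictly between the possible marks at `N * 2 ^ j` and `2 * N * 2 ^ j`
  have hj := D.le_pow (L + k.natAbs + 1)
  set s : ℤ := D.N * 2 ^ (L + k.natAbs + 1) with hs
  push_cast at hj
  have hN := D.N_pos
  refine ⟨s + 1 - k, D.N - 1, by omega, by omega, fun i h0 hi => ?_⟩
  have h1 : sh k (D.A ξ) (s + 1 - k + i) = D.q (s + 1 - k + i + k) := by
    refine D.mk'_of_notMem ?_
    rintro (h | ⟨l, h, -⟩)
    · omega
    · have := D.pow_gap (j := L + k.natAbs + 1) (l := l)
      rw [← hs] at this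
      omega
  rw [h1]
  exact D.hq _ _ ⟨2 ^ (L + k.natAbs + 1) + 1, by rw [hs]; ring⟩

lemma chain_from {z : ℤ → Bool} (hz : z ∈ D.Z) : D.Chain z D.q := by
  rcases D.Z_cases hz with ⟨k, rfl⟩ | ⟨k, rfl⟩ | ⟨k, rfl⟩ | ⟨k, ξ, h, rfl⟩ | ⟨k, ξ, h, rfl⟩
  · exact D.chain_to_q k hz fun _ _ => rfl
  · exact Chain.trans D (D.chain_to_p k hz fun _ _ => rfl) D.chain_p_q
  · exact D.chain_to_q k hz fun i hi => if_neg (not_lt.2 hi)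
  · exact D.chain_A_q k h
  · exact Chain.trans D (D.chain_to_p k hz fun i hi => if_neg (not_lt.2 hi)) D.chain_p_q

lemma chain_q_C : D.Chain D.q D.C := by
  simpa only [sh_zero, B_top] using D.chain_q_B 0 le_rfl

lemma chain_to {z : ℤ → Bool} (hz : z ∈ D.Z) : D.Chain D.q z := by
  rcases D.Z_cases hz with ⟨k, rfl⟩ | ⟨k, rfl⟩ | ⟨k, rfl⟩ | ⟨k, ξ, h, rfl⟩ | ⟨k, ξ, h, rfl⟩
  · exact D.chain_q_q k
  · exact Chain.trans D D.chain_q_C (D.chain_C_p k)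
  · exact Chain.trans D D.chain_q_C (D.chain_C_P k)
  · exact D.chain_q_A k h
  · exact D.chain_q_B k h

/-- The map realizing the subshift `D.Z`. -/
theorem exists_map {n m : ℕ} (hn : (pr '' orb D.q).ncard = n + 1) (hm : D.O.ncard = m + 1) :
    ∃ (g : unitI → unitI) (c : unitI), Unimodal g c ∧ LEO g ∧
      HomeoOrd (omegaLimitSet g c) (ω ^ (α + 1) * ((n + 1 : ℕ) : Ordinal.{u})) ∧
      HomeoOrd (Inhom g c) (ω ^ (α + 1) * ((m + 1 : ℕ) : Ordinal.{u})) := by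
  have hα : α + 1 ≠ 0 := by simp
  have hgap : ∀ a ∈ pr '' D.Z, Gap D.N a := by
    rintro _ ⟨z, hz, rfl⟩
    exact D.Z_gap hz
  obtain ⟨w, hw, hlim⟩ := exists_limit_seq D.X_closed hgap ⟨_, D.q_mem', rfl⟩
    (by rintro _ ⟨z, hz, rfl⟩ L; exact D.chain_to hz L)
    (by rintro _ ⟨z, hz, rfl⟩ L; exact D.chain_from hz L)
  obtain ⟨g, c, h1, h2, ⟨h3⟩, ⟨h4⟩⟩ := realization D.Z_upper.1 (fun z hz => D.Z_sh hz)
    (fun z hz => D.Z_gap hz) hw hlim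
  refine ⟨g, c, h1, h2, ?_, ?_⟩
  · obtain ⟨e⟩ := OrdType.homeo D.X_closed (OrdType.of_CB_finite hα n _ D.X_closed
      (by rw [CB_X]; exact (D.orb_finite D.hq).image _) (by rw [CB_X, hn]))
    exact ⟨h3.trans e⟩
  · obtain ⟨e⟩ := OrdType.homeo D.Z_upper.1 (OrdType.of_CB_finite hα m _ D.Z_upper.1
      (by rw [CB_Z]; exact D.O_finite) (by rw [CB_Z, hm]))
    exact ⟨h4.trans e⟩

end Blueprint

end Chains

/-! ### Periodic sequences with prescribed orbit sizes -/

section Periodic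

open Blueprint

/-- Invariance of `z` under translation by `n`. -/
def Per (n : ℕ) (z : ℤ → Bool) : Prop := ∀ i j : ℤ, (n : ℤ) ∣ i - j → z i = z j

lemma Per.sh {n : ℕ} {z : ℤ → Bool} (h : Per n z) (k : ℤ) : Per n (sh k z) := fun i j hij =>
  h _ _ (by rwa [add_sub_add_right_eq_sub])

lemma Per.pr_inj {n : ℕ} (hn : 0 < n) {z z' : ℤ → Bool} (h : Per n z) (h' : Per n z')
    (he : pr z = pr z') : z = z' := by
  funext i
  have hi : 0 ≤ i + n * |i| := by
    have := neg_abs_le i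
    have := abs_nonneg i
    have : (1 : ℤ) ≤ n := by omega
    nlinarith
  have h1 := congrFun he (i + n * |i|).toNat
  simp only [pr] at h1
  rw [Int.toNat_of_nonneg hi] at h1
  rw [h i (i + n * |i|) ⟨-|i|, by ring⟩, h' i (i + n * |i|) ⟨-|i|, by ring⟩, h1]

/-- A sequence with least period `n` has an orbit with `n` elements. -/
lemma orb_ncard {n : ℕ} (hn : 0 < n) {z : ℤ → Bool} (h : Per n z)
    (hmin : ∀ k, sh k z = z → (n : ℤ) ∣ k) : (orb z).ncard = n := by
  have e : orb z = (fun k : ℤ => sh k z) '' Ico 0 (n : ℤ) := by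
    refine Subset.antisymm ?_ (image_subset_range _ _)
    rintro _ ⟨k, rfl⟩
    refine ⟨k % n, ⟨Int.emod_nonneg _ (by omega), Int.emod_lt_of_pos _ (by omega)⟩, ?_⟩
    funext i
    refine h _ _ ?_
    rw [add_sub_add_left_eq_sub]
    exact Int.dvd_emod_sub_self
  rw [e, InjOn.ncard_image, ← Nat.cast_inj (R := ℤ)]
  · rw [← Finset.coe_Ico, ncard_coe_finset]
    simp
  · rintro k ⟨hk0, hk⟩ l ⟨hl0, hl⟩ hkl
    have h1 : sh (k - l) z = z := by
      have h2 : sh (-l) (sh k z) = sh (-l) (sh l z) := congrArg _ hkl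
      rwa [sh_sh, sh_sh, neg_add_cancel, sh_zero, neg_add_eq_sub] at h2
    have h2 := Int.eq_zero_of_abs_lt_dvd (hmin _ h1) (by rw [abs_lt]; omega)
    omega

lemma pr_orb_ncard {n : ℕ} (hn : 0 < n) {z : ℤ → Bool} (h : Per n z)
    (hmin : ∀ k, sh k z = z → (n : ℤ) ∣ k) : (pr '' orb z).ncard = n := by
  rw [InjOn.ncard_image, orb_ncard hn h hmin]
  rintro _ ⟨k, rfl⟩ _ ⟨l, rfl⟩ he
  exact (h.sh k).pr_inj hn (h.sh l) he

/-- The sequence with `false` exactly at the multiples of `n`, or constantly `true` if `n < 2`. -/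
def qs (n : ℕ) (i : ℤ) : Bool := !decide (2 ≤ n ∧ (n : ℤ) ∣ i)

/-- The sequence with `false` exactly at the positions congruent to `0` or `-1` modulo `d`. -/
def rs (d : ℕ) (i : ℤ) : Bool := !decide ((d : ℤ) ∣ i ∨ (d : ℤ) ∣ i + 1)

lemma qs_eq_false {n : ℕ} {i : ℤ} : qs n i = false ↔ 2 ≤ n ∧ (n : ℤ) ∣ i := by simp [qs]

lemma qs_eq_true {n : ℕ} {i : ℤ} : qs n i = true ↔ ¬ (2 ≤ n ∧ (n : ℤ) ∣ i) := by
  rw [← qs_eq_false]; simp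

lemma rs_eq_false {n : ℕ} {i : ℤ} : rs n i = false ↔ (n : ℤ) ∣ i ∨ (n : ℤ) ∣ i + 1 := by
  rw [rs, Bool.not_eq_false', decide_eq_true_iff]

lemma rs_eq_true {n : ℕ} {i : ℤ} : rs n i = true ↔ ¬ ((n : ℤ) ∣ i ∨ (n : ℤ) ∣ i + 1) := by
  rw [← rs_eq_false]; simp

lemma qs_per (n : ℕ) : Per n (qs n) := by
  intro i j h
  simp only [qs, dvd_iff_dvd_of_dvd_sub h]

lemma rs_per (d : ℕ) : Per d (rs d) := by
  intro i j h
  have h1 : (d : ℤ) ∣ i + 1 - (j + 1) := by rwa [add_sub_add_right_eq_sub]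
  simp only [rs, dvd_iff_dvd_of_dvd_sub h, dvd_iff_dvd_of_dvd_sub h1]

lemma not_dvd_small {n : ℕ} {a : ℤ} (ha : 0 < a) (han : a < n) : ¬ (n : ℤ) ∣ a := fun h => by
  have := Int.le_of_dvd ha h
  omega

lemma qs_min {n : ℕ} (hn : 0 < n) (k : ℤ) (h : sh k (qs n) = qs n) : (n : ℤ) ∣ k := by
  by_cases h2 : 2 ≤ n
  · have h1 := congrFun h 0
    rw [qs_eq_false.2 ⟨h2, dvd_zero _⟩] at h1
    simpa using (qs_eq_false.1 h1).2
  · rw [show n = 1 by omega]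
    simp

lemma rs_min {d : ℕ} (hd : 3 ≤ d) (k : ℤ) (h : sh k (rs d) = rs d) : (d : ℤ) ∣ k := by
  have h0 := congrFun h 0
  have h1 := congrFun h (-1)
  rw [rs_eq_false.2 (Or.inl (dvd_zero _))] at h0
  rw [rs_eq_false.2 (Or.inr (by simp))] at h1
  have hk0 := rs_eq_false.1 h0
  have hk1 := rs_eq_false.1 h1
  rw [zero_add] at hk0
  rw [show (-1 + k + 1 : ℤ) = k by ring] at hk1
  rcases hk0 with hk0 | hk0
  · exact hk0
  rcases hk1 with hk1 | hk1
  · refine absurd (dvd_sub hk0 hk1) ?_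
    rw [show (k + 1 - (-1 + k) : ℤ) = 2 by ring]
    exact not_dvd_small (by omega) (by omega)
  · exact hk1

/-- The second periodic sequence, with an orbit of `d` elements, or equal to the first one if
`d = 0`. -/
def ps (n d : ℕ) : ℤ → Bool := if d = 0 then qs n else if d ≤ 2 then qs d else rs d

lemma orb_disjoint {n d : ℕ} (hn : 0 < n) (hd : 0 < d) (h1 : ¬ (n = 1 ∧ d = 1))
    (h2 : ¬ (n = 2 ∧ d = 2)) : Disjoint (orb (qs n)) (orb (ps n d)) := by
  rw [disjoint_left]
  rintro _ ⟨k, rfl⟩ ⟨l, hkl⟩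
  obtain ⟨t, ht⟩ : ∃ t : ℤ, ∀ i, qs n (i + t) = ps n d i := by
    refine ⟨k - l, fun i => ?_⟩
    have := congrFun hkl (i - l)
    simp only [sh] at this
    rw [sub_add_cancel] at this
    rw [this]
    congr 1
    ring
  rw [ps, if_neg hd.ne'] at ht
  split_ifs at ht with hd2
  · by_cases hd1 : d = 1
    · have h := ht (-t)
      rw [neg_add_cancel, qs_eq_false.2 ⟨by omega, dvd_zero _⟩, eq_comm, qs_eq_false] at h
      omega
    · have e0 := ht 0
      have e2 := ht 2
      obtain rfl : d = 2 := by omega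
      rw [qs_eq_false.2 ⟨le_rfl, by simp⟩, qs_eq_false] at e0 e2
      refine absurd (dvd_sub e2.2 e0.2) ?_
      rw [show (2 + t - (0 + t) : ℤ) = 2 by ring]
      exact not_dvd_small (by omega) (by omega)
  · have e0 := ht 0
    have e1 := ht (-1)
    rw [rs_eq_false.2 (Or.inl (dvd_zero _)), qs_eq_false] at e0
    rw [rs_eq_false.2 (Or.inr (by simp)), qs_eq_false] at e1
    refine absurd (dvd_sub e0.2 e1.2) ?_
    rw [show (0 + t - (-1 + t) : ℤ) = 1 by ring]
    exact not_dvd_small (by omega) (by omega)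

lemma ps_ncard {n d : ℕ} (hd : 0 < d) : (orb (ps n d)).ncard = d := by
  rw [ps, if_neg hd.ne']
  split_ifs with hd2
  · exact orb_ncard hd (qs_per d) fun k hk => qs_min hd k hk
  · exact orb_ncard hd (rs_per d) fun k hk => rs_min (by omega) k hk

end Periodic

/-! ### Assembling the map -/

section Final

open Ordinal

/-- A sequence which takes every value below the countable ordinal `ω ^ α` infinitely often. -/
lemma exists_code {α : Ordinal.{u}} (hα : α.card ≤ Cardinal.aleph0) : ∃ ε : ℕ → Ordinal.{u},
    (∀ j, ε j < ω ^ α) ∧ ∀ η < ω ^ α, ∀ J, ∃ j ≥ J, ε j = η := by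
  have hc : Countable (Iio (ω ^ α)) := by
    rw [← Cardinal.mk_le_aleph0_iff, Cardinal.mk_Iio_ordinal, Cardinal.lift_le_aleph0]
    refine (card_opow_le _ _).trans ?_
    simp [hα]
  have hne : Nonempty (Iio (ω ^ α)) := ⟨⟨0, opow_pos _ omega0_pos⟩⟩
  obtain ⟨f, hf⟩ := exists_surjective_nat (Iio (ω ^ α))
  refine ⟨fun j => f j.unpair.1, fun j => (f j.unpair.1).2, fun η hη J => ?_⟩
  obtain ⟨a, ha⟩ := hf ⟨η, hη⟩
  exact ⟨Nat.pair a J, Nat.right_le_pair a J, by simp [ha]⟩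

/-- The blueprint with periodic orbits of sizes `n` and `d`. -/
lemma exists_blueprint {α : Ordinal.{u}} (hα : 1 ≤ α) (hαc : α.card ≤ Cardinal.aleph0) {n d : ℕ}
    (hn : 0 < n) : ∃ D : Blueprint α, D.q = qs n ∧ D.p = ps n d := by
  obtain ⟨ε, hε, hε'⟩ := exists_code hαc
  have hM : 0 < n * max d 1 := Nat.mul_pos hn (by omega)
  have hnN : ((n : ℕ) : ℤ) ∣ ((2 * (n * max d 1) : ℕ) : ℤ) :=
    Int.natCast_dvd_natCast.2 ((dvd_mul_right n _).mul_left 2)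
  have hdN : d ≠ 0 → ((d : ℕ) : ℤ) ∣ ((2 * (n * max d 1) : ℕ) : ℤ) := fun hd => by
    rw [Int.natCast_dvd_natCast, max_eq_left (by omega)]
    exact (dvd_mul_left d n).mul_left 2
  have h1 : ∀ k : ℕ, qs k 1 = true := fun k => qs_eq_true.2 fun h =>
    not_dvd_small one_pos (by omega) h.2
  refine ⟨⟨2 * (n * max d 1), by omega, qs n, ps n d,
    fun i j h => qs_per n i j (hnN.trans h), fun i j h => ?_, h1 n, ?_, ε, hε, hε', hα⟩, rfl, rfl⟩
  · unfold ps
    split_ifs with hd hd2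
    · exact qs_per n i j (hnN.trans h)
    · exact qs_per d i j ((hdN hd).trans h)
    · exact rs_per d i j ((hdN hd).trans h)
  · unfold ps
    split_ifs with hd hd2
    · exact h1 n
    · exact h1 d
    · refine rs_eq_true.2 ?_
      rintro (h | h)
      · exact not_dvd_small one_pos (by omega) h
      · exact not_dvd_small (by omega) (by omega) h

end Final

theorem stmt6 (α : Ordinal) (hα : 2 ≤ α) (hαc : α.card ≤ Cardinal.aleph0)
    (n m : ℕ) (hn : 0 < n) (hm : 0 < m)
    (h : (n = 1 ∧ m ≠ 2) ∨ (n = 2 ∧ 2 ≤ m ∧ m ≠ 4) ∨ (2 < n ∧ n ≤ m)) :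
    ∃ (g : unitI → unitI) (c : unitI),
      Unimodal g c ∧ LEO g ∧
      HomeoOrd (omegaLimitSet g c) (Ordinal.omega0 ^ (α + 1) * n) ∧
      HomeoOrd (Inhom g c) (Ordinal.omega0 ^ (α + 1) * m) := by
  obtain ⟨D, hDq, hDp⟩ := exists_blueprint (d := m - n) (one_le_two.trans hα) hαc hn
  have h1 : (pr '' Blueprint.orb D.q).ncard = n - 1 + 1 := by
    rw [hDq, pr_orb_ncard hn (qs_per n) (qs_min hn)]
    omega
  have h2 : D.O.ncard = m - 1 + 1 := by
    have hq : (Blueprint.orb (qs n)).ncard = n := orb_ncard hn (qs_per n) (qs_min hn)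
    rcases Nat.eq_zero_or_pos (m - n) with hd | hd
    · rw [Blueprint.O, hDp, hDq, ps, if_pos hd, union_self, hq]
      omega
    · have hfq := D.orb_finite D.hq
      have hfp := D.orb_finite D.hp
      rw [hDq] at hfq
      rw [hDp] at hfp
      rw [Blueprint.O, hDp, hDq, ncard_union_eq (orb_disjoint hn hd (by omega) (by omega)) hfq hfp,
        hq, ps_ncard hd]
      omega
  obtain ⟨g, c, hg⟩ := D.exists_map h1 h2
  rw [Nat.sub_add_cancel hn, Nat.sub_add_cancel hm] at hg
  exact ⟨g, c, hg⟩

end
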